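/- Assume Conditions (C). Let m = m_n satisfy f·ℓ_n^{2/3}/C ≤ m ≤ 4f·ℓ_n^{2/3}/C. Then for f = f_n = o(n^{1/3}) sufficiently large there exists a constant A > 0 such that P( sup_{1 ≤ i ≤ m} L_i ≥ 10·f²·ℓ_n^{1/3}/C ) ≤ A·exp(−f/A), where L is the reflected exploration process of G(W, p_f). -/

import Mathlib

open MeasureTheory Filter Asymptotics
open scoped Classical ENNReal Topology

noncomputable section

/-- `ℓ_n`: the total weight. -/
def ell (w : ∀ n : ℕ, Fin n → ℝ) (n : ℕ) : ℝ := ∑ i, w n i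

/-- Conditions (C) on the triangular array of weights, relative to the law `μ` of the
limiting random variable `W`. -/
structure CondC (w : ∀ n : ℕ, Fin n → ℝ) (μ : Measure ℝ) : Prop where
  isProb : IsProbabilityMeasure μ
  pos : ∀ᵐ x ∂μ, 0 < x
  w_pos : ∀ n, ∀ i : Fin n, 0 < w n i
  w_anti : ∀ n, ∀ i j : Fin n, i ≤ j → w n j ≤ w n i
  int3 : Integrable (fun x => x ^ 3) μ
  moment_eq : ∫ x, x ^ 2 ∂μ = ∫ x, x ∂μ
  weak : ∀ g : BoundedContinuousFunction ℝ ℝ,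
    Tendsto (fun n : ℕ => (∑ i : Fin n, g (w n i)) / (n : ℝ)) atTop (𝓝 (∫ x, g x ∂μ))
  ell_asymp : (fun n : ℕ => ell w n - (∫ x, x ∂μ) * (n : ℝ)) =o[atTop]
      fun n : ℕ => (n : ℝ) ^ ((2 : ℝ) / 3)
  sq_asymp : (fun n : ℕ => (∑ i : Fin n, (w n i) ^ 2) - (∫ x, x ^ 2 ∂μ) * (n : ℝ)) =o[atTop]
      fun n : ℕ => (n : ℝ) ^ ((2 : ℝ) / 3)
  cube_asymp : (fun n : ℕ => (∑ i : Fin n, (w n i) ^ 3) - (∫ x, x ^ 3 ∂μ) * (n : ℝ)) =o[atTop]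
      fun _ : ℕ => (1 : ℝ)
  max_asymp : (fun n : ℕ => ⨆ i : Fin n, w n i) =o[atTop] fun n : ℕ => (n : ℝ) ^ ((1 : ℝ) / 3)

/-- The constant `C = E[W³]/E[W]`. -/
def Cconst (μ : Measure ℝ) : ℝ := (∫ x, x ^ 3 ∂μ) / (∫ x, x ∂μ)

/-- The critical percolation parameter `p_f = (ℓ_n^{1/3} + f_n)/ℓ_n^{4/3}`. -/
def pf (w : ∀ n : ℕ, Fin n → ℝ) (f : ℕ → ℝ) (n : ℕ) : ℝ :=
  (ell w n ^ ((1 : ℝ) / 3) + f n) / ell w n ^ ((4 : ℝ) / 3)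

/-- A Bernoulli-type measure on `Bool` with parameter `p`. -/
def bern (p : ℝ) : Measure Bool :=
  ENNReal.ofReal (1 - p) • Measure.dirac false + ENNReal.ofReal p • Measure.dirac true

/-- The law of the independent edge indicators of the rank-1 inhomogeneous random graph
`G(W,p)`: the indicator attached to the (ordered) pair `(i,j)` is Bernoulli with success
probability `1 - exp (- w i * w j * p)`, all independent. -/
def graphMeasure (n : ℕ) (wn : Fin n → ℝ) (p : ℝ) : Measure (Fin n → Fin n → Bool) :=
  Measure.pi fun i => Measure.pi fun j => bern (1 - Real.exp (-(wn i * wn j * p)))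

/-- The simple graph built from a sample of edge indicators: `i ~ j` iff `i ≠ j` and the
indicator of the pair `(min i j, max i j)` is `true`. -/
def graphOf {n : ℕ} (ω : Fin n → Fin n → Bool) : SimpleGraph (Fin n) :=
  SimpleGraph.fromRel fun i j => ω (min i j) (max i j) = true

/-- The size (number of vertices) of a connected component. -/
def csize {n : ℕ} (G : SimpleGraph (Fin n)) (c : G.ConnectedComponent) : ℕ :=
  Nat.card {v : Fin n // G.connectedComponentMk v = c}

/-- The weight of a connected component: sum of the weights of its vertices. -/
def cweight {n : ℕ} (wn : Fin n → ℝ) (G : SimpleGraph (Fin n)) (c : G.ConnectedComponent) : ℝ :=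
  ∑ v : Fin n, if G.connectedComponentMk v = c then wn v else 0

/-- The number of edges of a connected component. -/
def cedges {n : ℕ} (G : SimpleGraph (Fin n)) (c : G.ConnectedComponent) : ℕ :=
  Nat.card {e : Sym2 (Fin n) // e ∈ G.edgeSet ∧ ∀ v ∈ e, G.connectedComponentMk v = c}

/-- The surplus (excess) of a connected component: edges − vertices + 1. -/
def csurplus {n : ℕ} (G : SimpleGraph (Fin n)) (c : G.ConnectedComponent) : ℤ :=
  (cedges G c : ℤ) - (csize G c : ℤ) + 1

/-- `c` is a largest connected component. -/
def isLargest {n : ℕ} (G : SimpleGraph (Fin n)) (c : G.ConnectedComponent) : Prop :=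
  ∀ c', csize G c' ≤ csize G c

/-- The finset of connected components of a graph on `Fin n`. -/
def comps {n : ℕ} (G : SimpleGraph (Fin n)) : Finset G.ConnectedComponent :=
  Finset.univ.image G.connectedComponentMk

/-- The law of the size-biased random order without replacement `(v(1),…,v(n))`, seen as a
measure on functions `Fin n → Fin n` (supported on permutations `σ`, with
`P(v = σ) = ∏_i w (σ i) / (ℓ_n − ∑_{k<i} w (σ k))`). -/
def sbMeasure (n : ℕ) (wn : Fin n → ℝ) : Measure (Fin n → Fin n) :=
  Measure.sum fun σ : Equiv.Perm (Fin n) =>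
    ENNReal.ofReal (∏ i : Fin n,
        wn (σ i) / ((∑ k, wn k) - ∑ k ∈ Finset.univ.filter fun k => k < i, wn (σ k))) •
      Measure.dirac ⇑σ

/-- The joint law of (edge indicators of `G(W,p)`, size-biased order), the two being
independent. -/
def expMeasure' (n : ℕ) (wn : Fin n → ℝ) (p : ℝ) :
    Measure ((Fin n → Fin n → Bool) × (Fin n → Fin n)) :=
  Measure.sum fun σ : Equiv.Perm (Fin n) =>
    ENNReal.ofReal (∏ i : Fin n,
        wn (σ i) / ((∑ k, wn k) - ∑ k ∈ Finset.univ.filter fun k => k < i, wn (σ k))) •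
      (graphMeasure n wn p).map fun g => (g, ⇑σ)

/-- `sbW wn vord k` is `w_{v(k)}` (1-based), with the conventions `w_{v(0)} = 0` and
`w_{v(k)} = 0` for `k > n`. -/
def sbW {n : ℕ} (wn : Fin n → ℝ) (vord : Fin n → Fin n) (k : ℕ) : ℝ :=
  if h : k - 1 < n then (if k = 0 then 0 else wn (vord ⟨k - 1, h⟩)) else 0

/-- The (0-based) first position, in the order `vord`, of a vertex of the component `c`;
this governs the order in which components are discovered by the breadth-first walk. -/
def firstIdx {n : ℕ} (G : SimpleGraph (Fin n)) (vord : Fin n → Fin n)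
    (c : G.ConnectedComponent) : ℕ :=
  sInf {i : ℕ | ∃ h : i < n, G.connectedComponentMk (vord ⟨i, h⟩) = c}

/-- The number of vertices explored strictly before the exploration of the component `c`
starts: components are explored in the order of their first appearance in `vord`, and the
exploration of `c` occupies the steps `startT c + 1, …, startT c + csize c`. -/
def startT {n : ℕ} (G : SimpleGraph (Fin n)) (vord : Fin n → Fin n)
    (c : G.ConnectedComponent) : ℕ :=
  ∑ v : Fin n, if firstIdx G vord (G.connectedComponentMk v) < firstIdx G vord c then 1 else 0

/-- The state (explored vertices, queue of discovered-but-unexplored vertices) of the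
breadth-first walk after `i` steps; roots are chosen as the first undiscovered vertex in the
order `vord`, and children are queued in the order `vord`. -/
def bfwQueue {n : ℕ} (G : SimpleGraph (Fin n)) (vord : Fin n → Fin n) :
    ℕ → Finset (Fin n) × List (Fin n)
  | 0 => (∅, [])
  | i + 1 =>
    let s := bfwQueue G vord i
    let q : List (Fin n) :=
      if s.2.isEmpty then ((List.ofFn vord).filter fun v => decide (v ∉ s.1)).take 1 else s.2
    match q with
    | [] => (s.1, [])
    | v :: rest =>
      (insert v s.1,
        rest ++ (List.ofFn vord).filter fun u => decide (G.Adj v u ∧ u ∉ s.1 ∧ u ∉ q))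

/-- The reflected exploration process `L` of the breadth-first walk:
`L_0 = 1`, `L_{i+1} = max (L_i + c(i+1) - 1) 1`. -/
def Lproc {n : ℕ} (G : SimpleGraph (Fin n)) (vord : Fin n → Fin n) (i : ℕ) : ℕ :=
  max (bfwQueue G vord i).2.length 1

/-- `discNbrs G vord i` is the number of neighbours of `v(i+1)` (0-based: `vord i`) outside
`{v(1),…,v(i+1)}`, i.e. the increment `X⁰_{i+1} + 1` of the process `L⁰`. -/
def discNbrs {n : ℕ} (G : SimpleGraph (Fin n)) (vord : Fin n → Fin n) (i : ℕ) : ℕ :=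
  Nat.card {j : Fin n // (∃ h : i < n, G.Adj (vord ⟨i, h⟩) j) ∧
    ∀ k : ℕ, ∀ hk : k < n, k ≤ i → vord ⟨k, hk⟩ ≠ j}

/-- The process `L⁰`: `L⁰_0 = 1`, `L⁰_{i+1} = L⁰_i + X⁰_{i+1}` where
`X⁰_{i+1} = ∑_{j ∉ {v(1),…,v(i+1)}} Y(v(i+1), j) − 1`. -/
def L0 {n : ℕ} (G : SimpleGraph (Fin n)) (vord : Fin n → Fin n) (m : ℕ) : ℤ :=
  1 - (m : ℤ) + ∑ i ∈ Finset.range m, (discNbrs G vord i : ℤ)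

/-- The deterministic-drift process `L̃^h`, defined by
`L̃^h_m + m − 1 = ∑_{i=1}^m ∑_{k > i+h} (1 − exp (−w_{v(i)} w_{v(k)} p))`,
the inner sum being over positions `k ≤ n` in the size-biased order. -/
def Ltilde {n : ℕ} (wn : Fin n → ℝ) (p : ℝ) (vord : Fin n → Fin n) (h m : ℕ) : ℝ :=
  1 - (m : ℝ) + ∑ i ∈ Finset.range m,
    if hi : i < n then
      ∑ k : Fin n, if i + h < (k : ℕ) then
        1 - Real.exp (-(wn (vord ⟨i, hi⟩) * wn (vord k) * p)) else 0
    else 0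

/-- The law of the independent exponential clocks `(T_k)_{k ≤ n}`, `T_k` of rate `w_k / ℓ_n`. -/
def clocksMeasure (n : ℕ) (wn : Fin n → ℝ) : Measure (Fin n → ℝ) :=
  Measure.pi fun k => ProbabilityTheory.expMeasure (wn k / ∑ i, wn i)

/-- `N(x)`: the number of clocks that have rung by time `x`. -/
def Nclock {n : ℕ} (x : ℝ) (ω : Fin n → ℝ) : ℕ :=
  ∑ k : Fin n, if ω k ≤ x then 1 else 0

/-- `X(x)`: the total weight of the clocks that have rung by time `x`. -/
def Xclock {n : ℕ} (wn : Fin n → ℝ) (x : ℝ) (ω : Fin n → ℝ) : ℝ :=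
  ∑ k : Fin n, if ω k ≤ x then wn k else 0

/-- Conditions (C2) on a pair of sequences `(a, b)`, relative to the constant `Ā`. -/
structure Cond2 (w : ∀ n : ℕ, Fin n → ℝ) (Abar : ℝ) (a b : ℕ → ℝ) : Prop where
  exp_lt : ∀ᶠ n : ℕ in atTop,
    Real.exp (-(b n) ^ 2 / (Abar * (b n * (n : ℝ) ^ ((1 : ℝ) / 3) + a n))) < 1 / 4
  a_top : Tendsto a atTop atTop
  b_top : Tendsto b atTop atTop
  a_lito : a =o[atTop] fun n : ℕ => (n : ℝ)
  b_bigO : b =O[atTop] a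
  a_bigO : a =O[atTop] fun n => b n * ell w n ^ ((1 : ℝ) / 3)
  a_sq_bigO : (fun n => a n ^ 2) =O[atTop] fun n => b n * ell w n

/-- Conditions (C3) on a quadruple of sequences `(a, b, c, d)`. -/
structure Cond3 (w : ∀ n : ℕ, Fin n → ℝ) (Abar : ℝ) (a b c d : ℕ → ℝ) : Prop where
  sum_lito : (fun n => a n + c n) =o[atTop] fun n : ℕ => (n : ℝ)
  diff_top : Tendsto (fun n => a n - b n) atTop atTop
  d_bigO : d =O[atTop] fun n => a n - b n
  c2 : Cond2 w Abar (fun n => Real.sqrt ((a n - b n) * (a n + c n))) d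

/-- The list of component sizes, sorted in decreasing order. -/
def sizesList {n : ℕ} (G : SimpleGraph (Fin n)) : List ℕ :=
  (((comps G).val.map fun c => csize G c).sort (· ≤ ·)).reverse

/-- `kthSize G k` is the size of the `(k+1)`-st largest connected component of `G`
(`0` if there is no such component). -/
def kthSize {n : ℕ} (G : SimpleGraph (Fin n)) (k : ℕ) : ℕ := (sizesList G).getD k 0

end

/-!
Write `g = f / ℓ^{1/3}` and `T = f ℓ^{2/3} / C`, so that `m ≤ 4 T` and the level to be exceeded is
`10 g T`. Fix the order of the vertices. Exploring the weight `x` discovers about `(1 + g) x`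
vertices, of total weight at most about `(1 + g) x`; an exponential supermartingale, whose bracket
is controlled by the explored weight and not by the number of steps, shows that outside an event of
probability `O(exp (-f))` the errors are at most `g T / 20` while the explored weight is `O(T)`.

Outside that event the bound is deterministic. Let `i` be the step that discovered the present head
of the queue, and `j` the last time at which the queue was empty. The queue is first in, first out,
so the vertices discovered before `i` are explored by now, and those in the queue were discovered at
or after `i`. There are at most `m` vertices of the first kind, hence the weight explored up to `i`
is at most `9 T / 2`. The vertices explored since `j` are the root of the component and vertices
discovered between `j` and `i`, whose total weight exceeds the weight explored between `j` and `i`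
by `O(g T)` only. The weight explored since `i` is therefore `O(g T)`, and so is the number of
vertices discovered since `i`, which bounds the length of the queue.
-/

section Inequalities

theorem one_sub_add_mul_exp_le_exp {t q : ℝ} (ht : |t| ≤ 1) (hq : 0 ≤ q) :
    1 - q + q * Real.exp t ≤ Real.exp ((t + t ^ 2) * q) := by
  have hexp : Real.exp t - 1 - t ≤ t ^ 2 := (abs_le.1 (Real.abs_exp_sub_one_sub_id_le ht)).2
  calc 1 - q + q * Real.exp t = q * (Real.exp t - 1 - t) + t * q + 1 := by ring
    _ ≤ q * t ^ 2 + t * q + 1 := by gcongr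
    _ = (t + t ^ 2) * q + 1 := by ring
    _ ≤ Real.exp ((t + t ^ 2) * q) := Real.add_one_le_exp _

theorem sub_sq_le_one_sub_exp_neg {x : ℝ} (hx : |x| ≤ 1) : x - x ^ 2 ≤ 1 - Real.exp (-x) := by
  have h := (abs_le.1 (Real.abs_exp_sub_one_sub_id_le ((abs_neg x).trans_le hx))).2
  linarith [neg_sq x]

theorem sum_union_le_add {ι : Type*} [DecidableEq ι] {s t : Finset ι} {a : ι → ℝ}
    (ha : ∀ i, 0 ≤ a i) :
    ∑ i ∈ s ∪ t, a i ≤ ∑ i ∈ s, a i + ∑ i ∈ t, a i := by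
  rw [← Finset.sum_union_inter]
  exact le_add_of_nonneg_right (Finset.sum_nonneg fun i _ => ha i)

end Inequalities

section Independence

variable {Ω ι E β : Type*}

/-- The event `A` depends only on the coordinates `X e ω`, `e ∈ S`. -/
def DeterminedBy (X : ι → Ω → E) (S : Set ι) (A : Set Ω) : Prop :=
  ∀ ω ω', (∀ e ∈ S, X e ω = X e ω') → ω ∈ A → ω' ∈ A

theorem DeterminedBy.preimage_image_eq {X : ι → Ω → E} {S : Set ι} {A : Set Ω}
    (hA : DeterminedBy X S A) :
    (fun ω (e : S) => X e ω) ⁻¹' ((fun ω (e : S) => X e ω) '' A) = A := by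
  refine (Set.subset_preimage_image _ _).antisymm' ?_
  rintro ω ⟨ω', hω', h⟩
  exact hA ω' ω (fun e he => congrFun h ⟨e, he⟩) hω'

variable [MeasurableSpace Ω] {P : Measure Ω}

theorem DeterminedBy.measure_inter_eq_mul [Finite ι] [Finite E] [MeasurableSpace E]
    [MeasurableSingletonClass E] {X : ι → Ω → E} (hX : ProbabilityTheory.iIndepFun X P)
    (hXm : ∀ e, Measurable (X e)) {S T : Set ι} (hST : Disjoint S T) {A B : Set Ω}
    (hA : DeterminedBy X S A) (hB : DeterminedBy X T B) : P (A ∩ B) = P A * P B := by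
  have hind := hX.indepFun_finset S.toFinite.toFinset T.toFinite.toFinset
    (by simpa [← Finset.disjoint_coe] using hST) hXm
  have hA' : DeterminedBy X S.toFinite.toFinset A := by simpa using hA
  have hB' : DeterminedBy X T.toFinite.toFinset B := by simpa using hB
  rw [← hA'.preimage_image_eq, ← hB'.preimage_image_eq]
  exact hind.measure_inter_preimage_eq_mul _ _ MeasurableSet.of_discrete MeasurableSet.of_discrete

/-- Freezing: conditionally on `Y = b`, the event `B Y` has its unconditional probability `P (B b)`
if `B b` is independent of `{Y = b}`. -/
theorem measure_mem_eq_lintegral_of_indep [Finite β] {Y : Ω → β}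
    (hY : ∀ b, MeasurableSet (Y ⁻¹' {b})) {B : β → Set Ω}
    (hind : ∀ b ∈ Set.range Y, P (Y ⁻¹' {b} ∩ B b) = P (Y ⁻¹' {b}) * P (B b)) :
    P {ω | ω ∈ B (Y ω)} = ∫⁻ ω, P (B (Y ω)) ∂P := by
  cases nonempty_fintype β
  let _ : MeasurableSpace β := ⊤
  have hYm : Measurable Y := measurable_to_countable' hY
  have hfiber (b : β) : Y ⁻¹' {b} ∩ {ω | ω ∈ B (Y ω)} = Y ⁻¹' {b} ∩ B b := by
    ext ω
    simp +contextual [Set.mem_preimage]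
  have hprod (b : β) : P (Y ⁻¹' {b} ∩ B b) = P (B b) * P (Y ⁻¹' {b}) := by
    by_cases hb : b ∈ Set.range Y
    · rw [hind b hb, mul_comm]
    · rw [Set.preimage_singleton_eq_empty.2 hb, Set.empty_inter, measure_empty, mul_zero]
  calc P {ω | ω ∈ B (Y ω)} = ∑ b, P.restrict {ω | ω ∈ B (Y ω)} (Y ⁻¹' {b}) := by
        rw [sum_measure_preimage_singleton _ fun b _ => hY b]
        simp
    _ = ∑ b, P (B b) * P (Y ⁻¹' {b}) :=
        Finset.sum_congr rfl fun b _ => by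
          rw [Measure.restrict_apply (hY b), hfiber, hprod]
    _ = ∫⁻ b, P (B b) ∂(P.map Y) := by
        rw [lintegral_fintype]
        simp only [Measure.map_apply hYm (MeasurableSet.singleton _)]
    _ = ∫⁻ ω, P (B (Y ω)) ∂P := lintegral_map (measurable_of_finite _) hYm

end Independence

section SizeBiased

/-- The probability of `σ` under the size-biased order without replacement. -/
noncomputable def sizeBiasedProb {n : ℕ} (wn : Fin n → ℝ) (σ : Equiv.Perm (Fin n)) : ℝ :=
  ∏ i, wn (σ i) / ((∑ k, wn k) - ∑ k with k < i, wn (σ k))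

theorem sizeBiasedProb_nonneg {n : ℕ} {wn : Fin n → ℝ} (hw : ∀ i, 0 ≤ wn i)
    (σ : Equiv.Perm (Fin n)) : 0 ≤ sizeBiasedProb wn σ := by
  refine Finset.prod_nonneg fun i _ => div_nonneg (hw _) ?_
  rw [sub_nonneg, ← Equiv.sum_comp σ wn]
  exact Finset.sum_le_univ_sum_of_nonneg fun _ => hw _

theorem sum_swap_succ {n : ℕ} (wn : Fin (n + 1) → ℝ) (a : Fin (n + 1)) :
    ∑ i : Fin n, wn (Equiv.swap 0 a i.succ) = (∑ k, wn k) - wn a := by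
  rw [← Equiv.sum_comp (Equiv.swap 0 a) wn, Fin.sum_univ_succ, Equiv.swap_apply_left,
    add_sub_cancel_left]

theorem sizeBiasedProb_decomposeFin_symm {n : ℕ} (wn : Fin (n + 1) → ℝ) (a : Fin (n + 1))
    (e : Equiv.Perm (Fin n)) :
    sizeBiasedProb wn (Equiv.Perm.decomposeFin.symm (a, e)) =
      wn a / (∑ k, wn k) * sizeBiasedProb (fun i => wn (Equiv.swap 0 a i.succ)) e := by
  rw [sizeBiasedProb, sizeBiasedProb, Fin.prod_univ_succ]
  congr 1
  · simp
  · refine Finset.prod_congr rfl fun i _ => ?_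
    have hlt : ∑ k with k < i.succ, wn (Equiv.Perm.decomposeFin.symm (a, e) k) =
        wn a + ∑ k with k < i, wn (Equiv.swap 0 a (e k).succ) := by
      rw [Finset.sum_filter, Finset.sum_filter, Fin.sum_univ_succ]
      simp
    rw [sum_swap_succ, Equiv.Perm.decomposeFin_symm_apply_succ, sub_sub, hlt]

theorem sum_sizeBiasedProb {n : ℕ} {wn : Fin n → ℝ} (hw : ∀ i, 0 < wn i) :
    ∑ σ, sizeBiasedProb wn σ = 1 := by
  induction n with
  | zero => simp [sizeBiasedProb]
  | succ n ih =>
    have hpos : 0 < ∑ k, wn k := Finset.sum_pos (fun i _ => hw i) Finset.univ_nonempty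
    rw [← Equiv.sum_comp Equiv.Perm.decomposeFin.symm, Fintype.sum_prod_type]
    simp only [sizeBiasedProb_decomposeFin_symm, ← Finset.mul_sum, ih fun _ => hw _, mul_one]
    rw [← Finset.sum_div, div_self hpos.ne']

theorem expMeasure'_le_of_forall_perm {n : ℕ} {wn : Fin n → ℝ} (hw : ∀ i, 0 < wn i) {p : ℝ}
    {B : Set ((Fin n → Fin n → Bool) × (Fin n → Fin n))} {b : ℝ≥0∞}
    (h : ∀ σ : Equiv.Perm (Fin n), graphMeasure n wn p {ω | (ω, ⇑σ) ∈ B} ≤ b) :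
    expMeasure' n wn p B ≤ b := by
  have hB : MeasurableSet B := MeasurableSet.of_discrete
  calc expMeasure' n wn p B
      = ∑ σ, ENNReal.ofReal (sizeBiasedProb wn σ) * graphMeasure n wn p {ω | (ω, ⇑σ) ∈ B} := by
        rw [expMeasure', Measure.sum_apply _ hB, tsum_fintype]
        refine Finset.sum_congr rfl fun σ _ => ?_
        rw [Measure.smul_apply, smul_eq_mul, Measure.map_apply (measurable_of_finite _) hB]
        rfl
    _ ≤ ∑ σ, ENNReal.ofReal (sizeBiasedProb wn σ) * b := by gcongr; exact h _
    _ = b := by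
        rw [← Finset.sum_mul,
          ← ENNReal.ofReal_sum_of_nonneg fun σ _ => sizeBiasedProb_nonneg (fun i => (hw i).le) σ,
          sum_sizeBiasedProb hw, ENNReal.ofReal_one, one_mul]

end SizeBiased

section Edges

/-- The probability that `v` and `u` are adjacent in `G(W, p)`. -/
noncomputable def edgeProb {n : ℕ} (wn : Fin n → ℝ) (p : ℝ) (v u : Fin n) : ℝ :=
  1 - Real.exp (-(wn v * wn u * p))

variable {n : ℕ} {wn : Fin n → ℝ} {p : ℝ}

theorem edgeProb_comm (v u : Fin n) : edgeProb wn p v u = edgeProb wn p u v := by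
  rw [edgeProb, edgeProb, mul_comm (wn v)]

theorem edgeProb_le_one (v u : Fin n) : edgeProb wn p v u ≤ 1 :=
  sub_le_self _ (Real.exp_nonneg _)

theorem edgeProb_nonneg (hw : ∀ i, 0 ≤ wn i) (hp : 0 ≤ p) (v u : Fin n) :
    0 ≤ edgeProb wn p v u :=
  sub_nonneg.2 (Real.exp_le_one_iff.2 (neg_nonpos.2 (mul_nonneg (mul_nonneg (hw v) (hw u)) hp)))

theorem edgeProb_le (v u : Fin n) : edgeProb wn p v u ≤ wn v * wn u * p := by
  have := Real.add_one_le_exp (-(wn v * wn u * p))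
  rw [edgeProb]
  linarith

theorem isProbabilityMeasure_bern {q : ℝ} (h₀ : 0 ≤ q) (h₁ : q ≤ 1) :
    IsProbabilityMeasure (bern q) := by
  constructor
  simp only [bern, Measure.add_apply, Measure.smul_apply, measure_univ, smul_eq_mul, mul_one]
  rw [← ENNReal.ofReal_add (sub_nonneg.2 h₁) h₀, sub_add_cancel, ENNReal.ofReal_one]

theorem lintegral_bern (q : ℝ) (h : Bool → ℝ≥0∞) :
    ∫⁻ b, h b ∂bern q = ENNReal.ofReal (1 - q) * h false + ENNReal.ofReal q * h true := by
  simp [bern, lintegral_add_measure, lintegral_smul_measure]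

theorem isProbabilityMeasure_bern_edgeProb (hw : ∀ i, 0 ≤ wn i) (hp : 0 ≤ p) (v u : Fin n) :
    IsProbabilityMeasure (bern (edgeProb wn p v u)) :=
  isProbabilityMeasure_bern (edgeProb_nonneg hw hp v u) (edgeProb_le_one v u)

theorem graphMeasure_eq_pi :
    graphMeasure n wn p = Measure.pi fun v => Measure.pi fun u => bern (edgeProb wn p v u) := rfl

theorem isProbabilityMeasure_graphMeasure (hw : ∀ i, 0 ≤ wn i) (hp : 0 ≤ p) :
    IsProbabilityMeasure (graphMeasure n wn p) := by
  have := isProbabilityMeasure_bern_edgeProb hw hp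
  rw [graphMeasure_eq_pi]
  infer_instance

theorem iIndepFun_graphMeasure (hw : ∀ i, 0 ≤ wn i) (hp : 0 ≤ p) :
    ProbabilityTheory.iIndepFun (fun (e : Fin n × Fin n) (ω : Fin n → Fin n → Bool) => ω e.1 e.2)
      (graphMeasure n wn p) := by
  have := isProbabilityMeasure_bern_edgeProb hw hp
  simpa only [Measure.infinitePi_eq_pi, graphMeasure_eq_pi] using
    ProbabilityTheory.iIndepFun_uncurry_infinitePi' (X := fun (_ _ : Fin n) (b : Bool) => b)
      (fun v u => bern (edgeProb wn p v u)) fun _ _ => measurable_id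

theorem lintegral_eval_graphMeasure (hw : ∀ i, 0 ≤ wn i) (hp : 0 ≤ p) (v u : Fin n)
    (h : Bool → ℝ≥0∞) :
    ∫⁻ ω, h (ω v u) ∂graphMeasure n wn p = ENNReal.ofReal (1 - edgeProb wn p v u) * h false +
      ENNReal.ofReal (edgeProb wn p v u) * h true := by
  have := isProbabilityMeasure_bern_edgeProb hw hp
  have hrow := measurePreserving_eval
    (fun v => Measure.pi fun u => bern (edgeProb wn p v u)) v
  have hentry := measurePreserving_eval (fun u => bern (edgeProb wn p v u)) u
  rw [graphMeasure_eq_pi, ← lintegral_bern]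
  exact (hentry.comp hrow).lintegral_comp (measurable_of_finite _)

theorem graphOf_adj_iff {ω : Fin n → Fin n → Bool} {v u : Fin n} :
    (graphOf ω).Adj v u ↔ v ≠ u ∧ ω (min v u) (max v u) = true := by
  rw [graphOf, SimpleGraph.fromRel_adj, min_comm u v, max_comm u v, or_self]

theorem injective_min_max (v : Fin n) :
    Function.Injective fun u : Fin n => (min v u, max v u) := by
  intro u u' h
  simp only [Prod.mk.injEq] at h
  grind

theorem edgeProb_min_max (v u : Fin n) :
    edgeProb wn p (min v u) (max v u) = edgeProb wn p v u := by
  rcases le_total v u with h | h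
  · rw [min_eq_left h, max_eq_right h]
  · rw [min_eq_right h, max_eq_left h, edgeProb_comm]

theorem lintegral_prod_edges (hw : ∀ i, 0 ≤ wn i) (hp : 0 ≤ p) (v : Fin n) (U : Finset (Fin n))
    (h : Fin n → Bool → ℝ≥0∞) :
    ∫⁻ ω, ∏ u ∈ U, h u (ω (min v u) (max v u)) ∂graphMeasure n wn p =
      ∏ u ∈ U, (ENNReal.ofReal (1 - edgeProb wn p v u) * h u false +
        ENNReal.ofReal (edgeProb wn p v u) * h u true) := by
  have hind := ((iIndepFun_graphMeasure hw hp).precomp (injective_min_max v)).comp h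
    fun _ => measurable_of_finite _
  refine (ProbabilityTheory.lintegral_prod_eq_prod_lintegral_of_indepFun U _ hind
    fun _ => measurable_of_finite _).trans (Finset.prod_congr rfl fun u _ => ?_)
  simp only [Function.comp_apply]
  rw [lintegral_eval_graphMeasure hw hp, edgeProb_min_max]

theorem lintegral_exp_sum_neighbors_le (hw : ∀ i, 0 ≤ wn i) (hp : 0 ≤ p) {t : Fin n → ℝ}
    (ht : ∀ u, |t u| ≤ 1) {v : Fin n} {U : Finset (Fin n)} (hv : v ∉ U) :
    ∫⁻ ω, ENNReal.ofReal (Real.exp (∑ u ∈ U with (graphOf ω).Adj v u, t u))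
        ∂graphMeasure n wn p ≤
      ENNReal.ofReal (Real.exp (∑ u ∈ U, (t u + t u ^ 2) * edgeProb wn p v u)) := by
  have hprod (ω : Fin n → Fin n → Bool) :
      ENNReal.ofReal (Real.exp (∑ u ∈ U with (graphOf ω).Adj v u, t u)) =
        ∏ u ∈ U, if ω (min v u) (max v u) then ENNReal.ofReal (Real.exp (t u)) else 1 := by
    rw [Real.exp_sum, ENNReal.ofReal_prod_of_nonneg fun _ _ => Real.exp_nonneg _,
      Finset.prod_filter]
    refine Finset.prod_congr rfl fun u hu => ?_
    simp only [graphOf_adj_iff, ne_of_mem_of_not_mem hu hv |>.symm, ne_eq, not_false_eq_true,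
      true_and]
  simp_rw [hprod]
  rw [lintegral_prod_edges hw hp v U fun u b => if b then ENNReal.ofReal (Real.exp (t u)) else 1,
    Real.exp_sum, ENNReal.ofReal_prod_of_nonneg fun _ _ => Real.exp_nonneg _]
  refine Finset.prod_le_prod' fun u _ => ?_
  have hq := edgeProb_nonneg hw hp v u
  have hq' : 0 ≤ 1 - edgeProb wn p v u := sub_nonneg.2 (edgeProb_le_one v u)
  simp only [Bool.false_eq_true, if_false, if_true, mul_one]
  rw [← ENNReal.ofReal_mul hq, ← ENNReal.ofReal_add hq' (by positivity)]
  exact ENNReal.ofReal_le_ofReal (one_sub_add_mul_exp_le_exp (ht u) hq)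

end Edges

section BreadthFirstStep

variable {n : ℕ} {G : SimpleGraph (Fin n)} {vord : Fin n → Fin n}
  {s : Finset (Fin n) × List (Fin n)} {R : Finset (Fin n)}

/-- The queue from which the next vertex is taken: the current queue, or a fresh root if that is
empty. -/
noncomputable def activeQueue (vord : Fin n → Fin n) (s : Finset (Fin n) × List (Fin n)) :
    List (Fin n) :=
  if s.2.isEmpty then ((List.ofFn vord).filter fun v => decide (v ∉ s.1)).take 1 else s.2

/-- The vertex explored next, as a set with at most one element; it is empty once every vertex is
explored. -/
noncomputable def current (vord : Fin n → Fin n) (s : Finset (Fin n) × List (Fin n)) :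
    Finset (Fin n) :=
  (activeQueue vord s).head?.toFinset

/-- The vertices that can be discovered in the next step. -/
noncomputable def undiscovered (vord : Fin n → Fin n) (s : Finset (Fin n) × List (Fin n)) :
    Finset (Fin n) :=
  {u | u ∉ s.1 ∧ u ∉ activeQueue vord s}

/-- The vertices discovered in the next step of the breadth-first walk. -/
noncomputable def children (G : SimpleGraph (Fin n)) (vord : Fin n → Fin n)
    (s : Finset (Fin n) × List (Fin n)) : Finset (Fin n) :=
  {u ∈ undiscovered vord s | ∃ v ∈ current vord s, G.Adj v u}

/-- The state of the breadth-first walk after a step that discovers the vertices `R`. -/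
noncomputable def bfwAdvance (vord : Fin n → Fin n) (s : Finset (Fin n) × List (Fin n))
    (R : Finset (Fin n)) : Finset (Fin n) × List (Fin n) :=
  (s.1 ∪ current vord s,
    (activeQueue vord s).tail ++ (List.ofFn vord).filter fun u => decide (u ∈ R))

/-- One step of the breadth-first walk. -/
noncomputable def bfwStep (G : SimpleGraph (Fin n)) (vord : Fin n → Fin n)
    (s : Finset (Fin n) × List (Fin n)) : Finset (Fin n) × List (Fin n) :=
  bfwAdvance vord s (children G vord s)

theorem children_eq_filter {v : Fin n} (h : current vord s = {v}) :
    children G vord s = {u ∈ undiscovered vord s | G.Adj v u} := by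
  simp [children, h]

theorem activeQueue_eq_nil_or_cons :
    (activeQueue vord s = [] ∧ current vord s = ∅) ∨
      ∃ v rest, activeQueue vord s = v :: rest ∧ current vord s = {v} := by
  rw [current]
  cases activeQueue vord s <;> simp

theorem current_eq_empty_or_singleton :
    current vord s = ∅ ∨ ∃ v, current vord s = {v} := by
  rcases activeQueue_eq_nil_or_cons (vord := vord) (s := s) with ⟨-, h⟩ | ⟨v, -, -, h⟩
  exacts [.inl h, .inr ⟨v, h⟩]

theorem bfwQueue_succ (i : ℕ) :
    bfwQueue G vord (i + 1) = bfwStep G vord (bfwQueue G vord i) := by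
  rw [bfwQueue]
  generalize bfwQueue G vord i = s
  change (match activeQueue vord s with
    | [] => (s.1, [])
    | v :: rest => (insert v s.1, rest ++ (List.ofFn vord).filter
        fun u => decide (G.Adj v u ∧ u ∉ s.1 ∧ u ∉ activeQueue vord s))) = _
  rcases activeQueue_eq_nil_or_cons (vord := vord) (s := s) with ⟨hq, hc⟩ | ⟨v, rest, hq, hc⟩
  · simp [bfwStep, bfwAdvance, children, hc, hq]
  · rw [bfwStep, bfwAdvance, children_eq_filter hc, hc, Finset.union_comm, ← Finset.insert_eq]
    simp [undiscovered, hq, and_comm]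

theorem bfwQueue_eq_iterate (i : ℕ) :
    bfwQueue G vord i = (bfwStep G vord)^[i] (∅, []) := by
  induction i with
  | zero => rfl
  | succ i ih => rw [bfwQueue_succ, ih, Function.iterate_succ_apply']

/-- The invariant of the states of the breadth-first walk, written as pairs of the set of explored
vertices and the queue. -/
def IsBfwState (s : Finset (Fin n) × List (Fin n)) : Prop :=
  s.2.Nodup ∧ ∀ u ∈ s.2, u ∉ s.1

theorem isBfwState_empty : IsBfwState ((∅, []) : Finset (Fin n) × List (Fin n)) := by
  simp [IsBfwState]

theorem children_subset_undiscovered : children G vord s ⊆ undiscovered vord s :=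
  Finset.filter_subset _ _

theorem notMem_of_mem_undiscovered {u : Fin n} (hu : u ∈ undiscovered vord s) : u ∉ s.1 :=
  (Finset.mem_filter.1 hu).2.1

theorem mem_activeQueue_of_mem_current {v : Fin n} (hv : v ∈ current vord s) :
    v ∈ activeQueue vord s :=
  List.mem_of_mem_head? (Option.mem_toFinset.1 hv)

theorem notMem_undiscovered_of_mem_current {v : Fin n} (hv : v ∈ current vord s) :
    v ∉ undiscovered vord s :=
  fun hu => (Finset.mem_filter.1 hu).2.2 (mem_activeQueue_of_mem_current hv)

theorem IsBfwState.notMem_of_mem_activeQueue (hs : IsBfwState s) {u : Fin n}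
    (hu : u ∈ activeQueue vord s) : u ∉ s.1 := by
  rw [activeQueue] at hu
  split_ifs at hu
  · simpa using (List.mem_filter.1 (List.mem_of_mem_take hu)).2
  · exact hs.2 u hu

theorem IsBfwState.nodup_activeQueue (hvord : Function.Injective vord) (hs : IsBfwState s) :
    (activeQueue vord s).Nodup := by
  rw [activeQueue]
  split_ifs
  · exact ((List.nodup_ofFn.2 hvord).filter _).sublist (List.take_sublist _ _)
  · exact hs.1

theorem IsBfwState.disjoint_current (hs : IsBfwState s) : Disjoint s.1 (current vord s) :=
  Finset.disjoint_right.2 fun _ hv =>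
    hs.notMem_of_mem_activeQueue (mem_activeQueue_of_mem_current hv)

theorem IsBfwState.advance (hvord : Function.Injective vord) (hs : IsBfwState s)
    (hR : R ⊆ undiscovered vord s) : IsBfwState (bfwAdvance vord s R) := by
  have hR' : ∀ u ∈ R, u ∉ s.1 ∧ u ∉ activeQueue vord s := fun u hu =>
    (Finset.mem_filter.1 (hR hu)).2
  have hq := hs.nodup_activeQueue hvord
  refine ⟨List.nodup_append.2 ⟨hq.tail, (List.nodup_ofFn.2 hvord).filter _, ?_⟩, fun u hu => ?_⟩
  · rintro u hu _ hu' rfl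
    exact (hR' u (of_decide_eq_true (List.mem_filter.1 hu').2)).2 (List.mem_of_mem_tail hu)
  · refine Finset.notMem_union.2 ?_
    rcases List.mem_append.1 hu with hu | hu
    · refine ⟨hs.notMem_of_mem_activeQueue (List.mem_of_mem_tail hu), ?_⟩
      rcases activeQueue_eq_nil_or_cons (vord := vord) (s := s) with ⟨-, h⟩ | ⟨v, rest, h, hc⟩
      · simp [h]
      · rw [h, List.tail_cons] at hu
        rw [hc, Finset.mem_singleton]
        rintro rfl
        exact (List.nodup_cons.1 (h ▸ hq)).1 hu
    · obtain ⟨hu₁, hu₂⟩ := hR' u (of_decide_eq_true (List.mem_filter.1 hu).2)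
      exact ⟨hu₁, fun h => hu₂ (mem_activeQueue_of_mem_current h)⟩

theorem IsBfwState.step (hvord : Function.Injective vord) (hs : IsBfwState s) :
    IsBfwState (bfwStep G vord s) :=
  hs.advance hvord children_subset_undiscovered

theorem IsBfwState.iterate_step (hvord : Function.Injective vord) (hs : IsBfwState s) (i : ℕ) :
    IsBfwState ((bfwStep G vord)^[i] s) := by
  induction i with
  | zero => exact hs
  | succ i ih => exact Function.iterate_succ_apply' (bfwStep G vord) i s ▸ ih.step hvord

theorem isBfwState_bfwQueue (hvord : Function.Injective vord) (i : ℕ) :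
    IsBfwState (bfwQueue G vord i) :=
  bfwQueue_eq_iterate (G := G) i ▸ isBfwState_empty.iterate_step hvord i

end BreadthFirstStep

section Deviations

variable {n : ℕ} {wn : Fin n → ℝ} {p : ℝ} {a : Fin n → ℝ} {vord : Fin n → Fin n}
  {s : Finset (Fin n) × List (Fin n)} {ω ω' : Fin n → Fin n → Bool}

/-- The conditional expectation, given the state `s`, of the `a`-weight of the vertices discovered
in the next step. -/
noncomputable def drift (wn : Fin n → ℝ) (p : ℝ) (a : Fin n → ℝ) (vord : Fin n → Fin n)
    (s : Finset (Fin n) × List (Fin n)) : ℝ :=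
  ∑ v ∈ current vord s, ∑ u ∈ undiscovered vord s, a u * edgeProb wn p v u

/-- The martingale part of the `a`-weight of the vertices discovered in `i` steps from the
state `s`. -/
noncomputable def compensatedSum (wn : Fin n → ℝ) (p : ℝ) (a : Fin n → ℝ)
    (G : SimpleGraph (Fin n)) (vord : Fin n → Fin n) (s : Finset (Fin n) × List (Fin n))
    (i : ℕ) : ℝ :=
  ∑ l ∈ Finset.range i, (∑ u ∈ children G vord ((bfwStep G vord)^[l] s), a u -
    drift wn p a vord ((bfwStep G vord)^[l] s))

/-- Within `k` steps from the state `s`, and while the explored weight is at most `K`, the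
martingale part of the discovered `a`-weight reaches the level `δ`. -/
def deviationEvent (wn : Fin n → ℝ) (p : ℝ) (a : Fin n → ℝ) (vord : Fin n → Fin n) (K δ : ℝ)
    (k : ℕ) (s : Finset (Fin n) × List (Fin n)) : Set (Fin n → Fin n → Bool) :=
  {ω | ∃ i ≤ k, ∑ u ∈ ((bfwStep (graphOf ω) vord)^[i] s).1, wn u ≤ K ∧
    δ ≤ compensatedSum wn p a (graphOf ω) vord s i}

theorem compensatedSum_succ (G : SimpleGraph (Fin n)) (i : ℕ) :
    compensatedSum wn p a G vord s (i + 1) =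
      (∑ u ∈ children G vord s, a u - drift wn p a vord s) +
        compensatedSum wn p a G vord (bfwStep G vord s) i := by
  rw [compensatedSum, Finset.sum_range_succ', add_comm]
  rfl

theorem mem_deviationEvent_succ {K δ : ℝ} {k : ℕ}
    (h : ω ∈ deviationEvent wn p a vord K δ (k + 1) s) :
    (∑ u ∈ s.1, wn u ≤ K ∧ δ ≤ 0) ∨
      ω ∈ deviationEvent wn p a vord K
        (δ - (∑ u ∈ children (graphOf ω) vord s, a u - drift wn p a vord s)) k
        (bfwAdvance vord s (children (graphOf ω) vord s)) := by
  obtain ⟨_ | i, hi, hK, hδ⟩ := h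
  · exact .inl ⟨hK, by simpa [compensatedSum] using hδ⟩
  · rw [compensatedSum_succ, ← sub_le_iff_le_add'] at hδ
    exact .inr ⟨i, Nat.le_of_succ_le_succ hi, hK, hδ⟩

theorem children_graphOf_congr {S : Finset (Fin n)} (hS : Disjoint S (current vord s))
    (hS' : Disjoint S (undiscovered vord s)) (h : ∀ i j, i ∉ S → j ∉ S → ω i j = ω' i j) :
    children (graphOf ω) vord s = children (graphOf ω') vord s := by
  refine Finset.filter_congr fun u hu => exists_congr fun v => and_congr_right fun hv => ?_
  have hu := Finset.disjoint_right.1 hS' hu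
  have hv := Finset.disjoint_right.1 hS hv
  rw [graphOf_adj_iff, graphOf_adj_iff, h _ _ (min_rec' (· ∉ S) hv hu) (max_rec' (· ∉ S) hv hu)]

theorem disjoint_undiscovered {S : Finset (Fin n)} (hS : S ⊆ s.1) :
    Disjoint S (undiscovered vord s) :=
  Finset.disjoint_right.2 fun _ hu h => notMem_of_mem_undiscovered hu (hS h)

theorem subset_iterate_bfwStep (G : SimpleGraph (Fin n)) (i : ℕ) :
    s.1 ⊆ ((bfwStep G vord)^[i] s).1 := by
  induction i with
  | zero => exact subset_rfl
  | succ i ih =>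
    rw [Function.iterate_succ_apply']
    exact ih.trans Finset.subset_union_left

theorem children_iterate_graphOf_congr (hvord : Function.Injective vord) (hs : IsBfwState s)
    (h : ∀ i j, i ∉ s.1 → j ∉ s.1 → ω i j = ω' i j) (l : ℕ) :
    children (graphOf ω) vord ((bfwStep (graphOf ω) vord)^[l] s) =
      children (graphOf ω') vord ((bfwStep (graphOf ω) vord)^[l] s) :=
  have hsub := subset_iterate_bfwStep (vord := vord) (s := s) (graphOf ω) l
  children_graphOf_congr ((hs.iterate_step hvord l).disjoint_current.mono_left hsub)
    (disjoint_undiscovered hsub) h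

theorem iterate_bfwStep_graphOf_congr (hvord : Function.Injective vord) (hs : IsBfwState s)
    (h : ∀ i j, i ∉ s.1 → j ∉ s.1 → ω i j = ω' i j) (l : ℕ) :
    (bfwStep (graphOf ω) vord)^[l] s = (bfwStep (graphOf ω') vord)^[l] s := by
  induction l with
  | zero => rfl
  | succ l ih =>
    rw [Function.iterate_succ_apply', Function.iterate_succ_apply', ← ih, bfwStep, bfwStep,
      children_iterate_graphOf_congr hvord hs h l]

theorem determinedBy_deviationEvent (hvord : Function.Injective vord) (hs : IsBfwState s)
    (K δ : ℝ) (k : ℕ) :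
    DeterminedBy (fun (e : Fin n × Fin n) (ω : Fin n → Fin n → Bool) => ω e.1 e.2)
      {e | e.1 ∉ s.1 ∧ e.2 ∉ s.1} (deviationEvent wn p a vord K δ k s) := by
  rintro ω ω' h ⟨i, hi, hK, hδ⟩
  have h' : ∀ i j, i ∉ s.1 → j ∉ s.1 → ω i j = ω' i j := fun i j hi hj => h (i, j) ⟨hi, hj⟩
  have hsum : compensatedSum wn p a (graphOf ω) vord s i =
      compensatedSum wn p a (graphOf ω') vord s i :=
    Finset.sum_congr rfl fun l _ => by
      rw [children_iterate_graphOf_congr hvord hs h', iterate_bfwStep_graphOf_congr hvord hs h']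
  exact ⟨i, hi, iterate_bfwStep_graphOf_congr hvord hs h' i ▸ hK, hsum ▸ hδ⟩

theorem determinedBy_children_preimage (R : Finset (Fin n)) :
    DeterminedBy (fun (e : Fin n × Fin n) (ω : Fin n → Fin n → Bool) => ω e.1 e.2)
      {e | e.1 ∈ current vord s ∨ e.2 ∈ current vord s}
      ((fun ω => children (graphOf ω) vord s) ⁻¹' {R}) := by
  rintro ω ω' h rfl
  refine (Finset.filter_congr fun u _ => exists_congr fun v => and_congr_right fun hv => ?_).symm
  have hedge : ω (min v u) (max v u) = ω' (min v u) (max v u) := by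
    refine h (min v u, max v u) ?_
    rcases le_total v u with hvu | hvu <;> simp [hvu, hv]
  rw [graphOf_adj_iff, graphOf_adj_iff, hedge]

theorem sum_sq_mul_edgeProb_le (hw : ∀ i, 0 ≤ wn i) (hp : 0 ≤ p) {κ : ℝ}
    (hκ : ∑ u, a u ^ 2 * (wn u * p) ≤ κ) (v : Fin n) (U : Finset (Fin n)) :
    ∑ u ∈ U, a u ^ 2 * edgeProb wn p v u ≤ κ * wn v := by
  have hnonneg : ∀ u, 0 ≤ a u ^ 2 * (wn u * p) := fun u =>
    mul_nonneg (sq_nonneg _) (mul_nonneg (hw u) hp)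
  calc ∑ u ∈ U, a u ^ 2 * edgeProb wn p v u ≤ ∑ u ∈ U, a u ^ 2 * (wn v * wn u * p) := by
        gcongr; exact edgeProb_le v _
    _ = (∑ u ∈ U, a u ^ 2 * (wn u * p)) * wn v := by
        rw [Finset.sum_mul]; exact Finset.sum_congr rfl fun u _ => by ring
    _ ≤ κ * wn v := by
        gcongr
        · exact hw v
        · exact (Finset.sum_le_univ_sum_of_nonneg hnonneg).trans hκ

theorem lintegral_exp_compensated_children_le (hw : ∀ i, 0 ≤ wn i) (hp : 0 ≤ p) {θ κ : ℝ}
    (ha : ∀ u, |θ * a u| ≤ 1) (hκ : ∑ u, a u ^ 2 * (wn u * p) ≤ κ) :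
    ∫⁻ ω, ENNReal.ofReal (Real.exp (θ * (∑ u ∈ children (graphOf ω) vord s, a u -
        drift wn p a vord s))) ∂graphMeasure n wn p ≤
      ENNReal.ofReal (Real.exp (θ ^ 2 * κ * ∑ v ∈ current vord s, wn v)) := by
  have := isProbabilityMeasure_graphMeasure hw hp
  rcases current_eq_empty_or_singleton (vord := vord) (s := s) with h | ⟨v, h⟩
  · simp [children, drift, h]
  have hv : v ∉ undiscovered vord s := notMem_undiscovered_of_mem_current (by simp [h])
  simp only [children_eq_filter h, drift, h, Finset.sum_singleton, mul_sub, Real.exp_sub,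
    div_eq_mul_inv, ENNReal.ofReal_mul (Real.exp_nonneg _), ← Real.exp_neg, Finset.mul_sum]
  rw [lintegral_mul_const _ (measurable_of_finite _)]
  refine (mul_le_mul_left (lintegral_exp_sum_neighbors_le hw hp ha hv) _).trans ?_
  rw [← ENNReal.ofReal_mul (Real.exp_nonneg _), ← Real.exp_add]
  refine ENNReal.ofReal_le_ofReal (Real.exp_le_exp.2 ?_)
  calc ∑ u ∈ undiscovered vord s, (θ * a u + (θ * a u) ^ 2) * edgeProb wn p v u +
        -∑ u ∈ undiscovered vord s, θ * (a u * edgeProb wn p v u)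
      = θ ^ 2 * ∑ u ∈ undiscovered vord s, a u ^ 2 * edgeProb wn p v u := by
        rw [← sub_eq_add_neg, ← Finset.sum_sub_distrib, Finset.mul_sum]
        exact Finset.sum_congr rfl fun u _ => by ring
    _ ≤ θ ^ 2 * (κ * wn v) := by gcongr; exact sum_sq_mul_edgeProb_le hw hp hκ v _
    _ = θ ^ 2 * κ * wn v := by ring

theorem measure_deviationEvent_advance_eq_lintegral (hw : ∀ i, 0 ≤ wn i) (hp : 0 ≤ p)
    (hvord : Function.Injective vord) (hs : IsBfwState s) (K : ℝ) (δ : Finset (Fin n) → ℝ)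
    (k : ℕ) :
    graphMeasure n wn p {ω | ω ∈ deviationEvent wn p a vord K (δ (children (graphOf ω) vord s)) k
        (bfwAdvance vord s (children (graphOf ω) vord s))} =
      ∫⁻ ω, graphMeasure n wn p (deviationEvent wn p a vord K (δ (children (graphOf ω) vord s)) k
        (bfwAdvance vord s (children (graphOf ω) vord s))) ∂graphMeasure n wn p := by
  refine measure_mem_eq_lintegral_of_indep
    (B := fun R => deviationEvent wn p a vord K (δ R) k (bfwAdvance vord s R))
    (fun _ => MeasurableSet.of_discrete) ?_
  rintro _ ⟨ω, rfl⟩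
  refine (determinedBy_children_preimage _).measure_inter_eq_mul (iIndepFun_graphMeasure hw hp)
    (fun _ => measurable_of_finite _) ?_
    (determinedBy_deviationEvent hvord (hs.advance hvord children_subset_undiscovered) K _ k)
  refine Set.disjoint_left.2 fun e he he' => ?_
  exact he.elim (fun h => he'.1 (Finset.mem_union_right _ h))
    fun h => he'.2 (Finset.mem_union_right _ h)

theorem one_le_exp_of_weight_le (wn : Fin n → ℝ) {θ κ K δ : ℝ} (hθ : 0 ≤ θ) (hκ : 0 ≤ κ)
    (hK : ∑ u ∈ s.1, wn u ≤ K) (hδ : δ ≤ 0) :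
    1 ≤ ENNReal.ofReal (Real.exp (θ ^ 2 * κ * (K - ∑ u ∈ s.1, wn u) - θ * δ)) := by
  rw [ENNReal.one_le_ofReal, Real.one_le_exp_iff]
  have h₁ := mul_nonneg (mul_nonneg (sq_nonneg θ) hκ) (sub_nonneg.2 hK)
  have h₂ := mul_nonpos_of_nonneg_of_nonpos hθ hδ
  linarith

/-- The exponential supermartingale pays `θ² κ` per unit of explored weight, not per step, which is
why no bound on the number `k` of steps enters. -/
theorem measure_deviationEvent_le (hw : ∀ i, 0 ≤ wn i) (hp : 0 ≤ p)
    (hvord : Function.Injective vord) {θ κ : ℝ} (hθ : 0 ≤ θ) (ha : ∀ u, |θ * a u| ≤ 1)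
    (hκ : ∑ u, a u ^ 2 * (wn u * p) ≤ κ) (K δ : ℝ) (k : ℕ) (hs : IsBfwState s) :
    graphMeasure n wn p (deviationEvent wn p a vord K δ k s) ≤
      ENNReal.ofReal (Real.exp (θ ^ 2 * κ * (K - ∑ u ∈ s.1, wn u) - θ * δ)) := by
  have := isProbabilityMeasure_graphMeasure hw hp
  have hκ₀ : 0 ≤ κ := (Finset.sum_nonneg fun u _ =>
    mul_nonneg (sq_nonneg (a u)) (mul_nonneg (hw u) hp)).trans hκ
  induction k generalizing s δ with
  | zero =>
    rcases (deviationEvent wn p a vord K δ 0 s).eq_empty_or_nonempty with h | ⟨ω, i, hi, hK, hδ⟩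
    · rw [h, measure_empty]
      exact zero_le
    · obtain rfl := Nat.le_zero.1 hi
      exact prob_le_one.trans
        (one_le_exp_of_weight_le wn hθ hκ₀ hK (by simpa [compensatedSum] using hδ))
  | succ k ih =>
    by_cases hbase : ∑ u ∈ s.1, wn u ≤ K ∧ δ ≤ 0
    · exact prob_le_one.trans (one_le_exp_of_weight_le wn hθ hκ₀ hbase.1 hbase.2)
    let R (ω : Fin n → Fin n → Bool) := children (graphOf ω) vord s
    let incr (R : Finset (Fin n)) := ∑ u ∈ R, a u - drift wn p a vord s
    let c := θ ^ 2 * κ * (K - ∑ u ∈ s.1 ∪ current vord s, wn u) - θ * δ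
    calc graphMeasure n wn p (deviationEvent wn p a vord K δ (k + 1) s)
        ≤ graphMeasure n wn p {ω | ω ∈ deviationEvent wn p a vord K (δ - incr (R ω)) k
            (bfwAdvance vord s (R ω))} :=
          measure_mono fun ω hω => (mem_deviationEvent_succ hω).resolve_left hbase
      _ = ∫⁻ ω, graphMeasure n wn p (deviationEvent wn p a vord K (δ - incr (R ω)) k
            (bfwAdvance vord s (R ω))) ∂graphMeasure n wn p :=
          measure_deviationEvent_advance_eq_lintegral hw hp hvord hs K (δ - incr ·) k
      _ ≤ ∫⁻ ω, ENNReal.ofReal (Real.exp c) * ENNReal.ofReal (Real.exp (θ * incr (R ω)))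
            ∂graphMeasure n wn p := by
          refine lintegral_mono fun ω =>
            (ih (δ - incr (R ω)) (hs.advance hvord children_subset_undiscovered)).trans_eq ?_
          rw [← ENNReal.ofReal_mul (Real.exp_nonneg _), ← Real.exp_add]
          simp only [c, bfwAdvance]
          ring_nf
      _ ≤ ENNReal.ofReal (Real.exp c) *
            ENNReal.ofReal (Real.exp (θ ^ 2 * κ * ∑ v ∈ current vord s, wn v)) := by
          rw [lintegral_const_mul _ (measurable_of_finite _)]
          gcongr
          exact lintegral_exp_compensated_children_le hw hp ha hκ
      _ = ENNReal.ofReal (Real.exp (θ ^ 2 * κ * (K - ∑ u ∈ s.1, wn u) - θ * δ)) := by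
          rw [← ENNReal.ofReal_mul (Real.exp_nonneg _), ← Real.exp_add]
          simp only [c, Finset.sum_union hs.disjoint_current]
          ring_nf

theorem compensatedSum_neg (G : SimpleGraph (Fin n)) (i : ℕ) :
    compensatedSum wn p (-a) G vord s i = -compensatedSum wn p a G vord s i := by
  rw [compensatedSum, compensatedSum, ← Finset.sum_neg_distrib]
  refine Finset.sum_congr rfl fun l _ => ?_
  simp only [drift, Pi.neg_apply, neg_mul, Finset.sum_neg_distrib]
  ring

theorem measure_exists_le_abs_compensatedSum_le (hw : ∀ i, 0 ≤ wn i) (hp : 0 ≤ p)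
    (hvord : Function.Injective vord) {θ κ : ℝ} (hθ : 0 ≤ θ) (ha : ∀ u, |θ * a u| ≤ 1)
    (hκ : ∑ u, a u ^ 2 * (wn u * p) ≤ κ) (K δ : ℝ) (k : ℕ) :
    graphMeasure n wn p {ω | ∃ i ≤ k, ∑ u ∈ (bfwQueue (graphOf ω) vord i).1, wn u ≤ K ∧
        δ ≤ |compensatedSum wn p a (graphOf ω) vord (∅, []) i|} ≤
      2 * ENNReal.ofReal (Real.exp (θ ^ 2 * κ * K - θ * δ)) := by
  have hneg : ∀ u, |θ * (-a) u| ≤ 1 := fun u => by rw [Pi.neg_apply, mul_neg, abs_neg]; exact ha u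
  have hupper := measure_deviationEvent_le hw hp hvord hθ ha hκ K δ k isBfwState_empty
  have hlower := measure_deviationEvent_le hw hp hvord hθ hneg (by simpa using hκ) K δ k
    isBfwState_empty
  simp only [Finset.sum_empty, sub_zero] at hupper hlower
  rw [two_mul]
  refine (measure_mono ?_).trans ((measure_union_le _ _).trans (add_le_add hupper hlower))
  rintro ω ⟨i, hi, hK, hδ⟩
  rw [bfwQueue_eq_iterate] at hK
  rcases le_abs.1 hδ with h | h
  · exact .inl ⟨i, hi, hK, h⟩
  · exact .inr ⟨i, hi, hK, h.trans_eq (compensatedSum_neg _ _).symm⟩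

end Deviations

section FirstInFirstOut

variable {n : ℕ} {G : SimpleGraph (Fin n)} {vord : Fin n → Fin n}
  {s : Finset (Fin n) × List (Fin n)}

/-- The vertices that are explored or queued. -/
def discovered (s : Finset (Fin n) × List (Fin n)) : Finset (Fin n) :=
  s.1 ∪ s.2.toFinset

/-- The vertices discovered in step `k` of the breadth-first walk; steps are numbered from `0`. -/
noncomputable def childrenAt (G : SimpleGraph (Fin n)) (vord : Fin n → Fin n) (k : ℕ) :
    Finset (Fin n) :=
  children G vord (bfwQueue G vord k)

/-- `u` is discovered no later than `v`; the roots of the walk, which are nobody's children,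
satisfy this vacuously. -/
def DiscoveredNoLater (G : SimpleGraph (Fin n)) (vord : Fin n → Fin n) (u v : Fin n) : Prop :=
  ∀ l l', u ∈ childrenAt G vord l → v ∈ childrenAt G vord l' → l ≤ l'

theorem activeQueue_of_ne_nil (h : s.2 ≠ []) : activeQueue vord s = s.2 := by
  rw [activeQueue, if_neg (by simpa using h)]

theorem current_subset_of_ne_nil (h : s.2 ≠ []) : current vord s ⊆ s.2.toFinset := fun v hv => by
  simpa [activeQueue_of_ne_nil h] using mem_activeQueue_of_mem_current hv

theorem toFinset_activeQueue_eq_current_union_tail :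
    (activeQueue vord s).toFinset = current vord s ∪ (activeQueue vord s).tail.toFinset := by
  rcases activeQueue_eq_nil_or_cons (vord := vord) (s := s) with ⟨h, hc⟩ | ⟨v, rest, h, hc⟩
  · simp [h, hc]
  · rw [h, hc, List.toFinset_cons, List.tail_cons, Finset.insert_eq]

theorem tail_activeQueue_of_eq_nil (h : s.2 = []) : (activeQueue vord s).tail = [] := by
  rw [activeQueue, if_pos (by simp [h]), ← List.drop_one, List.drop_take_self]

theorem toFinset_activeQueue :
    (activeQueue vord s).toFinset = s.2.toFinset ∪ current vord s := by
  by_cases h : s.2 = []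
  · simp [toFinset_activeQueue_eq_current_union_tail, tail_activeQueue_of_eq_nil h, h]
  · rw [Finset.union_eq_left.2 (current_subset_of_ne_nil h), activeQueue_of_ne_nil h]

theorem mem_undiscovered_iff {u : Fin n} :
    u ∈ undiscovered vord s ↔ u ∉ discovered s ∪ current vord s := by
  rw [discovered, Finset.union_assoc, ← toFinset_activeQueue]
  simp [undiscovered]

theorem discovered_bfwStep (hvord : Function.Surjective vord) :
    discovered (bfwStep G vord s) = discovered s ∪ current vord s ∪ children G vord s := by
  have hchildren : ((List.ofFn vord).filter fun u => decide (u ∈ children G vord s)).toFinset =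
      children G vord s := by
    ext u
    simpa [List.mem_ofFn] using fun _ => hvord u
  rw [discovered, discovered, Finset.union_assoc s.1, ← toFinset_activeQueue,
    toFinset_activeQueue_eq_current_union_tail, bfwStep, bfwAdvance, List.toFinset_append,
    hchildren]
  simp only [Finset.union_assoc]

theorem discovered_bfwQueue_succ (hvord : Function.Surjective vord) (k : ℕ) :
    discovered (bfwQueue G vord (k + 1)) =
      discovered (bfwQueue G vord k) ∪ current vord (bfwQueue G vord k) ∪ childrenAt G vord k := by
  rw [bfwQueue_succ, discovered_bfwStep hvord, childrenAt]

theorem explored_bfwQueue_succ (k : ℕ) :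
    (bfwQueue G vord (k + 1)).1 =
      (bfwQueue G vord k).1 ∪ current vord (bfwQueue G vord k) := by
  rw [bfwQueue_succ, bfwStep, bfwAdvance]

theorem monotone_explored : Monotone fun k => (bfwQueue G vord k).1 :=
  monotone_nat_of_le_succ fun k => (explored_bfwQueue_succ k).symm ▸ Finset.subset_union_left

theorem monotone_discovered (hvord : Function.Surjective vord) :
    Monotone fun k => discovered (bfwQueue G vord k) :=
  monotone_nat_of_le_succ fun k => by
    simp only [discovered_bfwQueue_succ hvord, Finset.union_assoc]
    exact Finset.subset_union_left

theorem card_explored_le (k : ℕ) : (bfwQueue G vord k).1.card ≤ k := by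
  induction k with
  | zero => simp [bfwQueue]
  | succ k ih =>
    rw [explored_bfwQueue_succ]
    refine (Finset.card_union_le _ _).trans (add_le_add ih ?_)
    rcases current_eq_empty_or_singleton (vord := vord) (s := bfwQueue G vord k) with h | ⟨v, h⟩ <;>
      simp [h]

theorem childrenAt_subset_discovered (hvord : Function.Surjective vord) {l k : ℕ} (hlk : l < k) :
    childrenAt G vord l ⊆ discovered (bfwQueue G vord k) := by
  refine Finset.Subset.trans ?_ (monotone_discovered hvord (Nat.succ_le_of_lt hlk))
  simp only [discovered_bfwQueue_succ hvord]
  exact Finset.subset_union_right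

theorem lt_of_mem_childrenAt_of_mem_discovered (hvord : Function.Surjective vord) {l k : ℕ}
    {u : Fin n} (hu : u ∈ childrenAt G vord l) (huk : u ∈ discovered (bfwQueue G vord k)) :
    l < k := by
  by_contra! hkl
  exact mem_undiscovered_iff.1 (children_subset_undiscovered hu)
    (Finset.mem_union_left _ (monotone_discovered hvord hkl huk))

theorem pairwise_disjoint_childrenAt (hvord : Function.Surjective vord) :
    Pairwise (Function.onFun Disjoint (childrenAt G vord)) := by
  have key : ∀ l k, l < k → Disjoint (childrenAt G vord l) (childrenAt G vord k) := fun l k hlk =>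
    Finset.disjoint_left.2 fun u hu hu' =>
      (lt_of_mem_childrenAt_of_mem_discovered hvord hu'
        (childrenAt_subset_discovered hvord hlk hu)).false
  exact fun l k hlk => hlk.lt_or_gt.elim (key l k) fun h => (key k l h).symm

theorem pairwiseDisjoint_childrenAt (hvord : Function.Surjective vord) (I : Set ℕ) :
    I.PairwiseDisjoint (childrenAt G vord) :=
  (pairwise_disjoint_childrenAt hvord).set_pairwise I

theorem discoveredNoLater_of_mem_childrenAt (hvord : Function.Surjective vord) {k : ℕ}
    {u v : Fin n} (hu : u ∈ discovered (bfwQueue G vord (k + 1))) (hv : v ∈ childrenAt G vord k) :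
    DiscoveredNoLater G vord u v := by
  intro l l' hl hl'
  obtain rfl : l' = k := by
    by_contra h
    exact Finset.disjoint_left.1 (pairwise_disjoint_childrenAt hvord h) hl' hv
  exact Nat.le_of_lt_succ (lt_of_mem_childrenAt_of_mem_discovered hvord hl hu)

theorem queue_bfwQueue_succ (k : ℕ) :
    (bfwQueue G vord (k + 1)).2 = (bfwQueue G vord k).2.tail ++
      (List.ofFn vord).filter fun u => decide (u ∈ childrenAt G vord k) := by
  rw [bfwQueue_succ, bfwStep, bfwAdvance, childrenAt]
  by_cases h : (bfwQueue G vord k).2 = []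
  · simp [tail_activeQueue_of_eq_nil h, h]
  · rw [activeQueue_of_ne_nil h]

theorem rel_of_mem_current_of_mem_tail {r : Fin n → Fin n → Prop} {u v : Fin n}
    (h : s.2.Pairwise r) (hu : u ∈ current vord s) (hv : v ∈ s.2.tail) : r u v := by
  have hq : s.2 ≠ [] := List.ne_nil_of_mem (List.mem_of_mem_tail hv)
  rw [current, activeQueue_of_ne_nil hq, Option.mem_toFinset, List.head?_eq_some_head hq,
    Option.mem_some] at hu
  exact hu ▸ h.rel_head_tail hv

theorem pairwise_discoveredNoLater_bfwQueue (hvord : Function.Surjective vord) (k : ℕ) :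
    (bfwQueue G vord k).2.Pairwise (DiscoveredNoLater G vord) ∧
      ∀ u ∈ (bfwQueue G vord k).1, ∀ v ∈ (bfwQueue G vord k).2, DiscoveredNoLater G vord u v := by
  induction k with
  | zero => simp [bfwQueue]
  | succ k ih =>
    obtain ⟨hqueue, hexplored⟩ := ih
    have hnew : ∀ u ∈ discovered (bfwQueue G vord (k + 1)),
        ∀ v ∈ (List.ofFn vord).filter fun u => decide (u ∈ childrenAt G vord k),
          DiscoveredNoLater G vord u v := fun u hu v hv =>
      discoveredNoLater_of_mem_childrenAt hvord hu (of_decide_eq_true (List.mem_filter.1 hv).2)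
    have hmem : ∀ u ∈ (bfwQueue G vord (k + 1)).2, u ∈ discovered (bfwQueue G vord (k + 1)) :=
      fun u hu => Finset.mem_union_right _ (List.mem_toFinset.2 hu)
    rw [queue_bfwQueue_succ] at hmem ⊢
    refine ⟨List.pairwise_append.2 ⟨hqueue.tail, ?_, fun u hu => ?_⟩, fun u hu v hv => ?_⟩
    · exact List.pairwise_of_forall_mem_list fun u hu =>
        hnew u (hmem u (List.mem_append_right _ hu))
    · exact hnew u (hmem u (List.mem_append_left _ hu))
    · rcases List.mem_append.1 hv with hv | hv
      · rw [explored_bfwQueue_succ] at hu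
        rcases Finset.mem_union.1 hu with hu | hu
        · exact hexplored u hu v (List.mem_of_mem_tail hv)
        · exact rel_of_mem_current_of_mem_tail hqueue hu hv
      · exact hnew u (Finset.mem_union_left _ hu) v hv

theorem discovered_subset_of_queue_eq_nil (hvord : Function.Surjective vord) {j k : ℕ}
    (hjk : j ≤ k) (hj : (bfwQueue G vord j).2 = [])
    (hne : ∀ t, j < t → t ≤ k → (bfwQueue G vord t).2 ≠ []) :
    discovered (bfwQueue G vord (k + 1)) ⊆
      (bfwQueue G vord (j + 1)).1 ∪ (Finset.Ico j (k + 1)).biUnion (childrenAt G vord) := by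
  induction k, hjk using Nat.le_induction with
  | base =>
    rw [discovered_bfwQueue_succ hvord, discovered, hj, List.toFinset_nil, Finset.union_empty,
      explored_bfwQueue_succ]
    simp
  | succ k hjk ih =>
    have hcurrent : current vord (bfwQueue G vord (k + 1)) ⊆
        discovered (bfwQueue G vord (k + 1)) :=
      (current_subset_of_ne_nil (hne _ (Nat.lt_succ_of_le hjk) le_rfl)).trans
        Finset.subset_union_right
    rw [discovered_bfwQueue_succ hvord, Finset.union_eq_left.2 hcurrent,
      ← Finset.insert_Ico_right_eq_Ico_add_one (by lia), Finset.biUnion_insert,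
      Finset.union_comm (childrenAt G vord (k + 1)), ← Finset.union_assoc]
    exact Finset.union_subset_union_left (ih fun t hjt ht => hne t hjt (ht.trans k.le_succ))

theorem exists_last_queue_eq_nil (k : ℕ) :
    ∃ j ≤ k, (bfwQueue G vord j).2 = [] ∧
      ∀ t, j < t → t ≤ k → (bfwQueue G vord t).2 ≠ [] := by
  have h0 : (bfwQueue G vord 0).2 = [] := rfl
  refine ⟨Nat.findGreatest (fun t => (bfwQueue G vord t).2 = []) k, Nat.findGreatest_le k,
    Nat.findGreatest_spec (P := fun t => (bfwQueue G vord t).2 = []) k.zero_le h0,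
    fun t => Nat.findGreatest_is_greatest⟩

/-- `i` is the step in which the head of the queue was discovered. -/
theorem exists_discovery_step (hvord : Function.Bijective vord) {j k : ℕ} (hjk : j ≤ k)
    (hsub : discovered (bfwQueue G vord (k + 1)) ⊆
      (bfwQueue G vord (j + 1)).1 ∪ (Finset.Ico j (k + 1)).biUnion (childrenAt G vord)) :
    ∃ i, j ≤ i ∧ i ≤ k ∧ ∀ l, ∀ u ∈ childrenAt G vord l,
      (u ∈ (bfwQueue G vord (k + 1)).2 → i ≤ l) ∧ (u ∈ (bfwQueue G vord (k + 1)).1 → l ≤ i) := by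
  obtain ⟨hqueue, hexplored⟩ :=
    pairwise_discoveredNoLater_bfwQueue (G := G) hvord.surjective (k + 1)
  have hnotMem := (isBfwState_bfwQueue (G := G) hvord.injective (k + 1)).2
  rcases hq : (bfwQueue G vord (k + 1)).2 with _ | ⟨v, rest⟩
  · exact ⟨k, hjk, le_rfl, fun l u hl => ⟨by simp, fun hu => Nat.le_of_lt_succ
      (lt_of_mem_childrenAt_of_mem_discovered hvord.surjective hl (Finset.mem_union_left _ hu))⟩⟩
  rw [hq] at hqueue hexplored hnotMem
  have hv : v ∈ (Finset.Ico j (k + 1)).biUnion (childrenAt G vord) :=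
    (Finset.mem_union.1 (hsub (Finset.mem_union_right _ (by simp [hq])))).resolve_left fun h =>
      hnotMem v List.mem_cons_self (monotone_explored (Nat.succ_le_succ hjk) h)
  obtain ⟨i, hi, hvi⟩ := Finset.mem_biUnion.1 hv
  rw [Finset.mem_Ico] at hi
  refine ⟨i, hi.1, Nat.le_of_lt_succ hi.2, fun l u hl => ⟨fun hu => ?_, fun hu =>
    hexplored u hu v List.mem_cons_self l i hl hvi⟩⟩
  rcases List.mem_cons.1 hu with rfl | hu
  · exact discoveredNoLater_of_mem_childrenAt hvord.surjective
      (childrenAt_subset_discovered hvord.surjective i.lt_succ_self hvi) hvi i l hvi hl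
  · exact (List.pairwise_cons.1 hqueue).1 u hu i l hvi hl

/-- `j` is the last time at which the queue was empty, and `i` is the step in which its present head
was discovered. -/
theorem exists_discovery_window (hvord : Function.Bijective vord) (k : ℕ) :
    ∃ j i, j ≤ i ∧ i ≤ k ∧
      (bfwQueue G vord (k + 1)).2.toFinset ⊆
        (Finset.Ico i (k + 1)).biUnion (childrenAt G vord) ∧
      (Finset.range i).biUnion (childrenAt G vord) ⊆ (bfwQueue G vord (k + 1)).1 ∧
      (bfwQueue G vord (k + 1)).1 ⊆
        (bfwQueue G vord (j + 1)).1 ∪ (Finset.Ico j (i + 1)).biUnion (childrenAt G vord) := by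
  obtain ⟨j, hjk, hj, hne⟩ := exists_last_queue_eq_nil (G := G) (vord := vord) k
  have hsub := discovered_subset_of_queue_eq_nil hvord.surjective hjk hj hne
  obtain ⟨i, hji, hik, hi⟩ := exists_discovery_step hvord hjk hsub
  have hnotMem := (isBfwState_bfwQueue (G := G) hvord.injective (k + 1)).2
  refine ⟨j, i, hji, hik, fun u hu => ?_, fun u hu => ?_, fun u hu => ?_⟩
  · have hu' := hnotMem u (List.mem_toFinset.1 hu)
    have hmem := (Finset.mem_union.1 (hsub (Finset.mem_union_right _ hu))).resolve_left fun h =>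
      hu' (monotone_explored (Nat.succ_le_succ hjk) h)
    obtain ⟨l, hl, hul⟩ := Finset.mem_biUnion.1 hmem
    exact Finset.mem_biUnion.2 ⟨l, Finset.mem_Ico.2
      ⟨(hi l u hul).1 (List.mem_toFinset.1 hu), (Finset.mem_Ico.1 hl).2⟩, hul⟩
  · obtain ⟨l, hl, hul⟩ := Finset.mem_biUnion.1 hu
    rw [Finset.mem_range] at hl
    refine (Finset.mem_union.1 (childrenAt_subset_discovered hvord.surjective
      (hl.trans_le (hik.trans k.le_succ)) hul)).resolve_right fun h => ?_
    exact hl.not_ge ((hi l u hul).1 (List.mem_toFinset.1 h))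
  · refine Finset.mem_union.2 ((Finset.mem_union.1 (hsub (Finset.mem_union_left _ hu))).imp_right
      fun h => ?_)
    obtain ⟨l, hl, hul⟩ := Finset.mem_biUnion.1 h
    exact Finset.mem_biUnion.2 ⟨l, Finset.mem_Ico.2
      ⟨(Finset.mem_Ico.1 hl).1, Nat.lt_succ_of_le ((hi l u hul).2 hu)⟩, hul⟩

theorem discovered_subset_explored_union_biUnion (hvord : Function.Surjective vord) (k : ℕ) :
    discovered (bfwQueue G vord k) ⊆
      (bfwQueue G vord k).1 ∪ (Finset.range k).biUnion (childrenAt G vord) := by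
  induction k with
  | zero => simp [discovered, bfwQueue]
  | succ k ih =>
    rw [discovered_bfwQueue_succ hvord, explored_bfwQueue_succ, Finset.range_add_one,
      Finset.biUnion_insert]
    grind

section Weights

variable {wn : Fin n → ℝ}

theorem sum_explored_succ (hvord : Function.Injective vord) (wn : Fin n → ℝ) (k : ℕ) :
    ∑ u ∈ (bfwQueue G vord (k + 1)).1, wn u =
      ∑ u ∈ (bfwQueue G vord k).1, wn u + ∑ u ∈ current vord (bfwQueue G vord k), wn u := by
  rw [explored_bfwQueue_succ, Finset.sum_union (isBfwState_bfwQueue hvord k).disjoint_current]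

theorem sum_le_sum_explored_add_sum_childrenAt_add_sum_undiscovered (hw : ∀ u, 0 ≤ wn u)
    (hvord : Function.Surjective vord) (k : ℕ) :
    ∑ u, wn u ≤ ∑ u ∈ (bfwQueue G vord (k + 1)).1, wn u +
      ∑ l ∈ Finset.range k, ∑ u ∈ childrenAt G vord l, wn u +
        ∑ u ∈ undiscovered vord (bfwQueue G vord k), wn u := by
  have hsub : (Finset.univ : Finset (Fin n)) ⊆ (bfwQueue G vord (k + 1)).1 ∪
      (Finset.range k).biUnion (childrenAt G vord) ∪ undiscovered vord (bfwQueue G vord k) := by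
    intro u _
    have := discovered_subset_explored_union_biUnion (G := G) hvord k
    rw [explored_bfwQueue_succ, Finset.mem_union (t := undiscovered vord _), mem_undiscovered_iff]
    grind
  rw [← Finset.sum_biUnion (pairwiseDisjoint_childrenAt hvord _)]
  exact (Finset.sum_le_sum_of_subset_of_nonneg hsub fun u _ _ => hw u).trans
    ((sum_union_le_add hw).trans (add_le_add_left (sum_union_le_add hw) _))

theorem exists_length_queue_le_sum_card_childrenAt (hvord : Function.Bijective vord)
    (hw : ∀ u, 0 ≤ wn u) (k : ℕ) :
    ∃ j i, j ≤ i ∧ i ≤ k ∧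
      (bfwQueue G vord (k + 1)).2.length ≤
        ∑ l ∈ Finset.Ico i (k + 1), (childrenAt G vord l).card ∧
      ∑ l ∈ Finset.range i, (childrenAt G vord l).card ≤ k + 1 ∧
      ∑ u ∈ (bfwQueue G vord (k + 1)).1, wn u ≤ ∑ u ∈ (bfwQueue G vord (j + 1)).1, wn u +
        ∑ l ∈ Finset.Ico j (i + 1), ∑ u ∈ childrenAt G vord l, wn u := by
  obtain ⟨j, i, hji, hik, hqueue, hrange, hexplored⟩ := exists_discovery_window (G := G) hvord k
  have hdisj := pairwiseDisjoint_childrenAt (G := G) hvord.surjective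
  refine ⟨j, i, hji, hik, ?_, ?_, ?_⟩
  · rw [← List.toFinset_card_of_nodup (isBfwState_bfwQueue hvord.injective (k + 1)).1]
    exact (Finset.card_le_card hqueue).trans Finset.card_biUnion_le
  · rw [← Finset.card_biUnion (hdisj _)]
    exact (Finset.card_le_card hrange).trans (card_explored_le _)
  · rw [← Finset.sum_biUnion (hdisj _)]
    exact (Finset.sum_le_sum_of_subset_of_nonneg hexplored fun u _ _ => hw u).trans
      (sum_union_le_add hw)

end Weights

end FirstInFirstOut

section Drift

variable {n : ℕ} {wn a : Fin n → ℝ} {p : ℝ} {vord : Fin n → Fin n}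
  {s : Finset (Fin n) × List (Fin n)}

theorem drift_le (hw : ∀ i, 0 ≤ wn i) (hp : 0 ≤ p) (ha : ∀ u, 0 ≤ a u) :
    drift wn p a vord s ≤ p * (∑ u, a u * wn u) * ∑ v ∈ current vord s, wn v := by
  rw [drift, Finset.mul_sum]
  refine Finset.sum_le_sum fun v _ => ?_
  calc ∑ u ∈ undiscovered vord s, a u * edgeProb wn p v u
      ≤ ∑ u, a u * edgeProb wn p v u :=
        Finset.sum_le_univ_sum_of_nonneg fun u => mul_nonneg (ha u) (edgeProb_nonneg hw hp v u)
    _ ≤ ∑ u, a u * (wn v * wn u * p) :=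
        Finset.sum_le_sum fun u _ => mul_le_mul_of_nonneg_left (edgeProb_le v u) (ha u)
    _ = p * (∑ u, a u * wn u) * wn v := by
        rw [Finset.mul_sum, Finset.sum_mul]
        exact Finset.sum_congr rfl fun u _ => by ring

theorem le_drift_one (hw : ∀ i, 0 ≤ wn i) (hp : 0 ≤ p) {ε : ℝ} (hε : ε ≤ 1)
    (hε' : ∀ u v, wn u * wn v * p ≤ ε) :
    (1 - ε) * (p * ∑ u ∈ undiscovered vord s, wn u) * ∑ v ∈ current vord s, wn v ≤
      drift wn p 1 vord s := by
  rw [drift, Finset.mul_sum]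
  refine Finset.sum_le_sum fun v _ => ?_
  rw [Finset.mul_sum, Finset.mul_sum, Finset.sum_mul]
  refine Finset.sum_le_sum fun u _ => ?_
  have hx : 0 ≤ wn v * wn u * p := mul_nonneg (mul_nonneg (hw v) (hw u)) hp
  calc (1 - ε) * (p * wn u) * wn v = wn v * wn u * p - ε * (wn v * wn u * p) := by ring
    _ ≤ wn v * wn u * p - (wn v * wn u * p) ^ 2 := by
        rw [sq]; gcongr; exact hε' v u
    _ ≤ (1 : Fin n → ℝ) u * edgeProb wn p v u := by
        rw [Pi.one_apply, one_mul]
        exact sub_sq_le_one_sub_exp_neg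
          ((abs_of_nonneg hx).trans_le ((hε' v u).trans hε))

end Drift

section DeterministicBound

variable {n : ℕ} {wn a : Fin n → ℝ} {p g T δ : ℝ} {vord : Fin n → Fin n} {G : SimpleGraph (Fin n)}

/-- The weight explored in the first `k` steps of the breadth-first walk. -/
noncomputable def exploredWeight (wn : Fin n → ℝ) (G : SimpleGraph (Fin n))
    (vord : Fin n → Fin n) (k : ℕ) : ℝ :=
  ∑ u ∈ (bfwQueue G vord k).1, wn u

/-- The finite-size form of near-criticality: the mean number of children of a vertex of weight
`x` is about `(1 + g) x`, and `T` is the time scale on which the queue is followed. -/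
structure NearCritical (wn : Fin n → ℝ) (p g T : ℝ) : Prop where
  weight_nonneg : ∀ i, 0 ≤ wn i
  p_nonneg : 0 ≤ p
  g_pos : 0 < g
  g_le : g ≤ 1 / 100
  T_pos : 0 < T
  weight_le : ∀ u, wn u ≤ g * T / 20
  one_le_sum : 1 ≤ p * ∑ u, wn u
  sum_le : p * ∑ u, wn u ≤ 1 + g
  sum_sq_le : p * ∑ u, wn u ^ 2 ≤ 1 + 11 / 10 * g
  mul_le : ∀ u v, wn u * wn v * p ≤ 1 / 20
  time_le : p * (25 * T) ≤ 1 / 20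

/-- While at most `m` steps are made and at most the weight `K` is explored, the number and the
weight of the discovered vertices are both within `δ` of the sums of their drifts. -/
def IsConcentrated (wn : Fin n → ℝ) (p : ℝ) (G : SimpleGraph (Fin n)) (vord : Fin n → Fin n)
    (K δ : ℝ) (m : ℕ) : Prop :=
  ∀ i ≤ m, exploredWeight wn G vord i ≤ K →
    |compensatedSum wn p 1 G vord (∅, []) i| < δ ∧ |compensatedSum wn p wn G vord (∅, []) i| < δ

theorem exploredWeight_zero : exploredWeight wn G vord 0 = 0 := by
  simp [exploredWeight, bfwQueue]

theorem monotone_exploredWeight (hw : ∀ i, 0 ≤ wn i) : Monotone (exploredWeight wn G vord) :=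
  fun _ _ h => Finset.sum_le_sum_of_subset_of_nonneg (monotone_explored h) fun u _ _ => hw u

theorem sum_current_eq (hvord : Function.Injective vord) {b c : ℕ} (hbc : b ≤ c) :
    ∑ l ∈ Finset.Ico b c, ∑ v ∈ current vord (bfwQueue G vord l), wn v =
      exploredWeight wn G vord c - exploredWeight wn G vord b := by
  rw [← Finset.sum_Ico_sub _ hbc]
  refine Finset.sum_congr rfl fun l _ => ?_
  rw [exploredWeight, exploredWeight, sum_explored_succ hvord, add_sub_cancel_left]

theorem compensatedSum_empty_eq (i : ℕ) :
    compensatedSum wn p a G vord (∅, []) i =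
      ∑ l ∈ Finset.range i,
        (∑ u ∈ childrenAt G vord l, a u - drift wn p a vord (bfwQueue G vord l)) := by
  simp only [compensatedSum, bfwQueue_eq_iterate, childrenAt]

theorem sum_childrenAt_le (hvord : Function.Injective vord) {r : ℝ}
    (hdrift : ∀ s, drift wn p a vord s ≤ r * ∑ v ∈ current vord s, wn v) {b c : ℕ} (hbc : b ≤ c)
    (hb : |compensatedSum wn p a G vord (∅, []) b| < δ)
    (hc : |compensatedSum wn p a G vord (∅, []) c| < δ) :
    ∑ l ∈ Finset.Ico b c, ∑ u ∈ childrenAt G vord l, a u ≤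
      r * (exploredWeight wn G vord c - exploredWeight wn G vord b) + 2 * δ := by
  have hsum : ∑ l ∈ Finset.Ico b c, drift wn p a vord (bfwQueue G vord l) ≤
      r * (exploredWeight wn G vord c - exploredWeight wn G vord b) := by
    rw [← sum_current_eq hvord hbc, Finset.mul_sum]
    exact Finset.sum_le_sum fun l _ => hdrift _
  have hdev : ∑ l ∈ Finset.Ico b c,
      (∑ u ∈ childrenAt G vord l, a u - drift wn p a vord (bfwQueue G vord l)) < 2 * δ := by
    rw [Finset.sum_Ico_eq_sub _ hbc, ← compensatedSum_empty_eq, ← compensatedSum_empty_eq]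
    linarith [abs_lt.1 hb, abs_lt.1 hc]
  rw [Finset.sum_sub_distrib] at hdev
  linarith

namespace NearCritical

variable {m : ℕ} (h : NearCritical wn p g T)
include h

theorem drift_one_le (s : Finset (Fin n) × List (Fin n)) :
    drift wn p 1 vord s ≤ (1 + g) * ∑ v ∈ current vord s, wn v := by
  refine (drift_le h.weight_nonneg h.p_nonneg fun _ => zero_le_one).trans ?_
  simp only [one_mul]
  exact mul_le_mul_of_nonneg_right h.sum_le (Finset.sum_nonneg fun v _ => h.weight_nonneg v)

theorem drift_weight_le (s : Finset (Fin n) × List (Fin n)) :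
    drift wn p wn vord s ≤ (1 + 11 / 10 * g) * ∑ v ∈ current vord s, wn v := by
  refine (drift_le h.weight_nonneg h.p_nonneg h.weight_nonneg).trans ?_
  simp only [← sq]
  exact mul_le_mul_of_nonneg_right h.sum_sq_le (Finset.sum_nonneg fun v _ => h.weight_nonneg v)

theorem exploredWeight_succ_le (hvord : Function.Injective vord) (k : ℕ) :
    exploredWeight wn G vord (k + 1) ≤ exploredWeight wn G vord k + g * T / 20 := by
  rw [exploredWeight, exploredWeight, sum_explored_succ hvord]
  gcongr
  rcases current_eq_empty_or_singleton (vord := vord) (s := bfwQueue G vord k) with hc | ⟨v, hc⟩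
  · rw [hc, Finset.sum_empty]
    have := h.g_pos; have := h.T_pos; positivity
  · simpa [hc] using h.weight_le v

theorem le_drift_one_of_weight_le (hvord : Function.Surjective vord) {k : ℕ}
    (hexplored : exploredWeight wn G vord (k + 1) ≤ 10 * T)
    (hchildren : ∑ l ∈ Finset.range k, ∑ u ∈ childrenAt G vord l, wn u ≤ 12 * T) :
    9 / 10 * ∑ v ∈ current vord (bfwQueue G vord k), wn v ≤
      drift wn p 1 vord (bfwQueue G vord k) := by
  have hT := h.T_pos
  have hsum := sum_le_sum_explored_add_sum_childrenAt_add_sum_undiscovered (G := G)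
    h.weight_nonneg hvord k
  have hund : ∑ u, wn u - 25 * T ≤ ∑ u ∈ undiscovered vord (bfwQueue G vord k), wn u := by
    rw [exploredWeight] at hexplored
    linarith
  have hp := mul_le_mul_of_nonneg_left hund h.p_nonneg
  refine le_trans ?_ (le_drift_one h.weight_nonneg h.p_nonneg (by norm_num) h.mul_le)
  refine mul_le_mul_of_nonneg_right ?_ (Finset.sum_nonneg fun v _ => h.weight_nonneg v)
  linarith [h.one_le_sum, h.time_le]

variable (hvord : Function.Bijective vord)
  (hconc : IsConcentrated wn p G vord (10 * T) (g * T / 20) m)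
include hvord hconc

theorem sum_card_childrenAt_le {b c : ℕ} (hbc : b ≤ c) (hcm : c ≤ m)
    (hc : exploredWeight wn G vord c ≤ 10 * T) :
    ((∑ l ∈ Finset.Ico b c, (childrenAt G vord l).card : ℕ) : ℝ) ≤
      (1 + g) * (exploredWeight wn G vord c - exploredWeight wn G vord b) + g * T / 10 := by
  have hb := (monotone_exploredWeight h.weight_nonneg hbc).trans hc
  have := sum_childrenAt_le hvord.injective h.drift_one_le hbc (hconc b (hbc.trans hcm) hb).1
    (hconc c hcm hc).1
  simp only [Pi.one_apply, Finset.sum_const, nsmul_eq_mul, mul_one] at this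
  push_cast
  linarith

theorem sum_weight_childrenAt_le {b c : ℕ} (hbc : b ≤ c) (hcm : c ≤ m)
    (hc : exploredWeight wn G vord c ≤ 10 * T) :
    ∑ l ∈ Finset.Ico b c, ∑ u ∈ childrenAt G vord l, wn u ≤
      (1 + 11 / 10 * g) * (exploredWeight wn G vord c - exploredWeight wn G vord b) +
        g * T / 10 := by
  have hb := (monotone_exploredWeight h.weight_nonneg hbc).trans hc
  have := sum_childrenAt_le hvord.injective h.drift_weight_le hbc (hconc b (hbc.trans hcm) hb).2
    (hconc c hcm hc).2
  linarith

theorem sum_range_weight_childrenAt_le {k : ℕ} (hkm : k ≤ m)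
    (hk : exploredWeight wn G vord k ≤ 10 * T) :
    ∑ l ∈ Finset.range k, ∑ u ∈ childrenAt G vord l, wn u ≤ 12 * T := by
  have := h.sum_weight_childrenAt_le hvord hconc k.zero_le hkm hk
  rw [exploredWeight_zero, sub_zero, ← Finset.range_eq_Ico] at this
  nlinarith [h.g_le, h.g_pos, h.T_pos]

/-- Every unit of explored weight discovers at least `9/10` vertices on average. -/
theorem exploredWeight_le_of_sum_card_le {i k : ℕ} (hik : i ≤ k) (hkm : k ≤ m)
    (hk : exploredWeight wn G vord k ≤ 10 * T)
    (hcard : ((∑ l ∈ Finset.range i, (childrenAt G vord l).card : ℕ) : ℝ) ≤ 4 * T) :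
    exploredWeight wn G vord i ≤ 9 / 2 * T := by
  have hmono := monotone_exploredWeight (G := G) (vord := vord) h.weight_nonneg
  have hdrift : 9 / 10 * exploredWeight wn G vord i ≤
      ∑ l ∈ Finset.range i, drift wn p 1 vord (bfwQueue G vord l) := by
    have hsum := sum_current_eq (wn := wn) (G := G) hvord.injective i.zero_le
    rw [exploredWeight_zero, sub_zero, ← Finset.range_eq_Ico] at hsum
    rw [← hsum, Finset.mul_sum]
    refine Finset.sum_le_sum fun l hl => ?_
    rw [Finset.mem_range] at hl
    exact h.le_drift_one_of_weight_le hvord.surjective ((hmono (by lia)).trans hk)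
      (h.sum_range_weight_childrenAt_le hvord hconc (by lia) ((hmono (by lia)).trans hk))
  have hdev := (abs_lt.1 (hconc i (hik.trans hkm) ((hmono hik).trans hk)).1).1
  simp only [compensatedSum_empty_eq, Finset.sum_sub_distrib, Pi.one_apply, Finset.sum_const,
    nsmul_eq_mul, mul_one] at hdev
  push_cast at hcard
  nlinarith [h.g_le, h.T_pos]

variable (hm : (m : ℝ) ≤ 4 * T)
include hm

theorem exists_length_queue_le_and_exploredWeight_le {k : ℕ} (hkm : k + 1 ≤ m)
    (hk : exploredWeight wn G vord k ≤ 10 * T) :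
    ∃ i ≤ k + 1,
      (bfwQueue G vord (k + 1)).2.length ≤
        ∑ l ∈ Finset.Ico i (k + 1), (childrenAt G vord l).card ∧
      exploredWeight wn G vord i ≤ 9 / 2 * T ∧
      exploredWeight wn G vord (k + 1) ≤ exploredWeight wn G vord i + 27 / 5 * (g * T) := by
  obtain ⟨j, i, hji, hik, hlength, hcard, hweight⟩ :=
    exists_length_queue_le_sum_card_childrenAt (G := G) hvord h.weight_nonneg k
  have hcard' : ((∑ l ∈ Finset.range i, (childrenAt G vord l).card : ℕ) : ℝ) ≤ 4 * T :=
    (Nat.cast_le.2 (hcard.trans hkm)).trans hm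
  have hi := h.exploredWeight_le_of_sum_card_le hvord hconc hik (by lia) hk hcard'
  have hi_succ := h.exploredWeight_succ_le (G := G) hvord.injective i
  have hj_succ := h.exploredWeight_succ_le (G := G) hvord.injective j
  have hT := h.T_pos
  have hgT : 0 < g * T := mul_pos h.g_pos hT
  have hgT' : g * T ≤ T / 100 := by nlinarith [h.g_le]
  have hchildren := h.sum_weight_childrenAt_le hvord hconc (b := j) (c := i + 1) (by lia)
    (by lia) (by linarith)
  have hj : 0 ≤ exploredWeight wn G vord j := Finset.sum_nonneg fun u _ => h.weight_nonneg u
  refine ⟨i, by lia, hlength, hi, ?_⟩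
  have hgrowth : g * (exploredWeight wn G vord (i + 1) - exploredWeight wn G vord j) ≤
      g * (23 / 5 * T) := mul_le_mul_of_nonneg_left (by linarith) h.g_pos.le
  calc exploredWeight wn G vord (k + 1)
      ≤ exploredWeight wn G vord (j + 1) +
        ∑ l ∈ Finset.Ico j (i + 1), ∑ u ∈ childrenAt G vord l, wn u := hweight
    _ ≤ exploredWeight wn G vord i + 27 / 5 * (g * T) := by linarith

theorem exploredWeight_le_ten_mul {k : ℕ} (hkm : k ≤ m) :
    exploredWeight wn G vord k ≤ 10 * T := by
  induction k with
  | zero => rw [exploredWeight_zero]; linarith [h.T_pos]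
  | succ k ih =>
    obtain ⟨i, -, -, hi, hki⟩ := h.exists_length_queue_le_and_exploredWeight_le hvord hconc hm hkm
      (ih (by lia))
    nlinarith [h.g_le, h.T_pos]

theorem length_queue_lt {k : ℕ} (hkm : k + 1 ≤ m) :
    ((bfwQueue G vord (k + 1)).2.length : ℝ) < 10 * (g * T) := by
  obtain ⟨i, hik, hlength, -, hki⟩ := h.exists_length_queue_le_and_exploredWeight_le hvord hconc
    hm hkm (h.exploredWeight_le_ten_mul hvord hconc hm (by lia))
  have hgT : 0 < g * T := mul_pos h.g_pos h.T_pos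
  calc ((bfwQueue G vord (k + 1)).2.length : ℝ)
      ≤ (∑ l ∈ Finset.Ico i (k + 1), (childrenAt G vord l).card : ℕ) := Nat.cast_le.2 hlength
    _ ≤ (1 + g) * (exploredWeight wn G vord (k + 1) - exploredWeight wn G vord i) + g * T / 10 :=
        h.sum_card_childrenAt_le hvord hconc hik hkm
          (h.exploredWeight_le_ten_mul hvord hconc hm hkm)
    _ ≤ (1 + 1 / 100) * (27 / 5 * (g * T)) + g * T / 10 := by
        have := monotone_exploredWeight (G := G) (vord := vord) h.weight_nonneg hik
        gcongr ?_ * ?_ + _ <;> linarith [h.g_le]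
    _ < 10 * (g * T) := by linarith

end NearCritical

end DeterministicBound

section FixedOrder

variable {n : ℕ} {wn : Fin n → ℝ} {p : ℝ} {vord : Fin n → Fin n}

theorem measure_not_isConcentrated_le (hw : ∀ i, 0 ≤ wn i) (hp : 0 ≤ p)
    (hvord : Function.Injective vord) {θ κ : ℝ} (hθ : 0 ≤ θ) (hθ' : θ ≤ 1)
    (hθw : ∀ u, θ * wn u ≤ 1) (hκ : p * ∑ u, wn u ≤ κ) (hκ' : p * ∑ u, wn u ^ 3 ≤ κ)
    (K δ : ℝ) (m : ℕ) :
    graphMeasure n wn p {ω | ¬ IsConcentrated wn p (graphOf ω) vord K δ m} ≤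
      4 * ENNReal.ofReal (Real.exp (θ ^ 2 * κ * K - θ * δ)) := by
  have hone := measure_exists_le_abs_compensatedSum_le hw hp hvord (a := 1) (κ := κ) hθ
    (fun u => by simpa [abs_of_nonneg hθ] using hθ')
    (by simpa [mul_comm, Finset.mul_sum] using hκ) K δ m
  have hweight := measure_exists_le_abs_compensatedSum_le hw hp hvord (a := wn) (κ := κ) hθ
    (fun u => (abs_of_nonneg (mul_nonneg hθ (hw u))).trans_le (hθw u))
    (by simpa [pow_succ, mul_assoc, mul_comm, mul_left_comm, Finset.mul_sum] using hκ') K δ m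
  have hsub : {ω | ¬ IsConcentrated wn p (graphOf ω) vord K δ m} ⊆
      {ω | ∃ i ≤ m, ∑ u ∈ (bfwQueue (graphOf ω) vord i).1, wn u ≤ K ∧
        δ ≤ |compensatedSum wn p 1 (graphOf ω) vord (∅, []) i|} ∪
      {ω | ∃ i ≤ m, ∑ u ∈ (bfwQueue (graphOf ω) vord i).1, wn u ≤ K ∧
        δ ≤ |compensatedSum wn p wn (graphOf ω) vord (∅, []) i|} := by
    intro ω hω
    simp only [IsConcentrated, exploredWeight, Set.mem_ofPred_eq, not_forall, not_and_or,
      not_lt] at hω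
    obtain ⟨i, him, hK, hδ | hδ⟩ := hω
    · exact Or.inl ⟨i, him, hK, hδ⟩
    · exact Or.inr ⟨i, him, hK, hδ⟩
  calc _ ≤ _ := (measure_mono hsub).trans (measure_union_le _ _)
    _ ≤ _ := add_le_add hone hweight
    _ = _ := by rw [← add_mul]; norm_num

theorem NearCritical.Lproc_lt {g T : ℝ} (h : NearCritical wn p g T)
    (hvord : Function.Bijective vord) {G : SimpleGraph (Fin n)} {m : ℕ}
    (hconc : IsConcentrated wn p G vord (10 * T) (g * T / 20) m) (hm : (m : ℝ) ≤ 4 * T)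
    (hgT : 1 < 10 * (g * T)) {i : ℕ} (hi : 1 ≤ i) (him : i ≤ m) :
    (Lproc G vord i : ℝ) < 10 * (g * T) := by
  obtain ⟨k, rfl⟩ := Nat.exists_eq_add_of_le' hi
  rw [Lproc, Nat.cast_max, Nat.cast_one]
  exact max_lt (h.length_queue_lt hvord hconc hm him) hgT

/-- The finite-size form of Conditions (C) for weights of total `r ^ 3`, together with the range
of `f` in which the tail bound holds. -/
structure IsScaled (wn : Fin n → ℝ) (r C K f : ℝ) : Prop where
  weight_nonneg : ∀ i, 0 ≤ wn i
  one_le_r : 1 ≤ r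
  C_pos : 0 < C
  one_le_K : 1 ≤ K
  le_f : 400 * K + 20 * C ≤ f
  f_le : 100 * f ≤ r
  f_le_mul : 600 * f ≤ C * r
  weight_le : ∀ u, 10 * wn u ≤ r
  mul_weight_le : ∀ u, 20 * C * wn u ≤ r
  sum_eq : ∑ u, wn u = r ^ 3
  sum_sq_le : ∑ u, wn u ^ 2 ≤ r ^ 3 + K * r ^ 2
  sum_cube_le : ∑ u, wn u ^ 3 ≤ K * r ^ 3

namespace IsScaled

variable {r C K f : ℝ} (h : IsScaled wn r C K f)
include h

theorem one_le_f : 1 ≤ f := by linarith [h.le_f, h.one_le_K, h.C_pos]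

theorem div_le : f / r ≤ 1 / 100 := by
  rw [div_le_iff₀ (by linarith [h.one_le_r])]
  linarith [h.f_le]

theorem mul_sum_eq : (r + f) / r ^ 4 * ∑ u, wn u = 1 + f / r := by
  have := h.one_le_r
  rw [h.sum_eq]
  field_simp

theorem mul_sum_sq_le : (r + f) / r ^ 4 * ∑ u, wn u ^ 2 ≤ 1 + 11 / 10 * (f / r) := by
  have hr : 0 < r := by linarith [h.one_le_r]
  have hf : 0 < f := by linarith [h.one_le_f]
  have hK : K ≤ f / 100 := by linarith [h.le_f, h.C_pos, h.one_le_K]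
  calc (r + f) / r ^ 4 * ∑ u, wn u ^ 2
      ≤ (r + f) / r ^ 4 * (r ^ 3 + f / 100 * r ^ 2) := by
        gcongr
        exact h.sum_sq_le.trans (by gcongr)
    _ = (1 + f / r) * (1 + f / r / 100) := by field_simp
    _ ≤ 1 + 11 / 10 * (f / r) := by nlinarith [h.div_le, div_pos hf hr]

theorem mul_sum_cube_le : (r + f) / r ^ 4 * ∑ u, wn u ^ 3 ≤ 2 * K := by
  have hr : 0 < r := by linarith [h.one_le_r]
  have hf : 0 < f := by linarith [h.one_le_f]
  have hK := h.one_le_K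
  calc (r + f) / r ^ 4 * ∑ u, wn u ^ 3 ≤ (r + f) / r ^ 4 * (K * r ^ 3) := by
        gcongr
        exact h.sum_cube_le
    _ = (1 + f / r) * K := by field_simp
    _ ≤ 2 * K := by
        gcongr
        linarith [h.div_le]

theorem mul_mul_le (u v : Fin n) : wn u * wn v * ((r + f) / r ^ 4) ≤ 1 / 20 := by
  have hr := h.one_le_r
  have hf := h.one_le_f
  calc wn u * wn v * ((r + f) / r ^ 4) ≤ r / 10 * (r / 10) * ((r + f) / r ^ 4) := by
        have hu := h.weight_le u
        have hv := h.weight_le v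
        have := h.weight_nonneg v
        gcongr <;> linarith
    _ = (1 + f / r) / r / 100 := by field_simp; norm_num
    _ ≤ (1 + f / r) / 100 := by
        gcongr
        exact div_le_self (by positivity) hr
    _ ≤ 1 / 20 := by linarith [h.div_le]

theorem nearCritical : NearCritical wn ((r + f) / r ^ 4) (f / r) (f * r ^ 2 / C) := by
  have hr := h.one_le_r
  have hf := h.one_le_f
  have hC := h.C_pos
  exact {
    weight_nonneg := h.weight_nonneg
    p_nonneg := by positivity
    g_pos := by positivity
    g_le := h.div_le
    T_pos := by positivity
    weight_le := fun u => by
      calc wn u ≤ 1 ^ 2 * r / (20 * C) := by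
            rw [le_div_iff₀ (by positivity)]
            linarith [h.mul_weight_le u]
        _ ≤ f ^ 2 * r / (20 * C) := by gcongr
        _ = f / r * (f * r ^ 2 / C) / 20 := by field_simp
    one_le_sum := by
      rw [h.mul_sum_eq]
      exact le_add_of_nonneg_right (by positivity)
    sum_le := h.mul_sum_eq.le
    sum_sq_le := h.mul_sum_sq_le
    mul_le := h.mul_mul_le
    time_le := by
      calc (r + f) / r ^ 4 * (25 * (f * r ^ 2 / C)) = 25 * (1 + f / r) * (f / (C * r)) := by
            field_simp
        _ ≤ 25 * (1 + 1 / 100) * (1 / 600) := by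
            gcongr 25 * (1 + ?_) * ?_
            · exact h.div_le
            · rw [div_le_iff₀ (by positivity)]
              linarith [h.f_le_mul]
        _ ≤ 1 / 20 := by norm_num }

theorem measure_exists_le_Lproc_le (hvord : Function.Bijective vord) {m : ℕ}
    (hm : (m : ℝ) ≤ 4 * f * r ^ 2 / C) :
    graphMeasure n wn ((r + f) / r ^ 4)
        {ω | ∃ i, 1 ≤ i ∧ i ≤ m ∧ 10 * f ^ 2 * r / C ≤ (Lproc (graphOf ω) vord i : ℝ)} ≤
      4 * ENNReal.ofReal (Real.exp (-f)) := by
  have hr := h.one_le_r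
  have hf := h.one_le_f
  have hC := h.C_pos
  have hlevel : 10 * f ^ 2 * r / C = 10 * (f / r * (f * r ^ 2 / C)) := by field_simp
  have hlevel_gt : 1 < 10 * f ^ 2 * r / C := by
    rw [lt_div_iff₀ hC]
    nlinarith [h.le_f, h.one_le_K, mul_le_mul hf hr zero_le_one (by linarith)]
  refine (measure_mono ?_).trans <| (measure_not_isConcentrated_le h.weight_nonneg
    h.nearCritical.p_nonneg hvord.injective (θ := 1 / r) (κ := 2 * K) (by positivity)
    ((div_le_one (by linarith)).2 hr)
    (fun u => ?_) ?_ h.mul_sum_cube_le (10 * (f * r ^ 2 / C))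
    (f / r * (f * r ^ 2 / C) / 20) m).trans ?_
  · rintro ω ⟨i, hi, him, hL⟩ hconc
    rw [hlevel] at hL hlevel_gt
    exact hL.not_gt (h.nearCritical.Lproc_lt hvord hconc (hm.trans_eq (by ring)) hlevel_gt hi him)
  · rw [one_div_mul_eq_div, div_le_one (by linarith)]
    linarith [h.weight_le u, h.weight_nonneg u]
  · rw [h.mul_sum_eq]
    linarith [h.div_le, h.one_le_K]
  · gcongr
    calc (1 / r) ^ 2 * (2 * K) * (10 * (f * r ^ 2 / C)) - 1 / r * (f / r * (f * r ^ 2 / C) / 20)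
        = f * (400 * K - f) / (20 * C) := by field_simp; ring
      _ ≤ -f := by
          rw [div_le_iff₀ (by positivity)]
          nlinarith [h.le_f]

end IsScaled

end FixedOrder

section Moments

variable {μ : Measure ℝ}

theorem integral_pow_pos_of_ae_pos [NeZero μ] (hpos : ∀ᵐ x ∂μ, 0 < x) {k : ℕ}
    (hint : Integrable (fun x => x ^ k) μ) : 0 < ∫ x, x ^ k ∂μ := by
  rw [integral_pos_iff_support_of_nonneg_ae (hpos.mono fun x hx => (pow_pos hx k).le) hint,
    pos_iff_ne_zero, Ne, measure_eq_zero_iff_ae_notMem]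
  intro hzero
  obtain ⟨x, hx, hx'⟩ := (hpos.and hzero).exists
  exact hx' (pow_pos hx k).ne'

end Moments

namespace CondC

variable {w : ∀ n : ℕ, Fin n → ℝ} {μ : Measure ℝ} (hC : CondC w μ)
include hC

theorem integral_pos : 0 < ∫ x, x ∂μ := by
  have := hC.isProb
  have hid : Integrable (fun x : ℝ => ‖x‖ ^ 1) μ :=
    integrable_norm_pow_of_le aestronglyMeasurable_id (by norm_num : 1 ≤ 3)
      (by simpa using hC.int3.norm)
  have hid' : Integrable (fun x : ℝ => x ^ 1) μ := by
    simpa using (integrable_norm_iff (f := fun x : ℝ => x) (by fun_prop)).1 (by simpa using hid)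
  simpa using integral_pow_pos_of_ae_pos hC.pos hid'

theorem Cconst_pos : 0 < Cconst μ := by
  have := hC.isProb
  exact div_pos (integral_pow_pos_of_ae_pos hC.pos hC.int3) hC.integral_pos

theorem ell_isEquivalent : ell w ~[atTop] fun n => (∫ x, x ∂μ) * (n : ℝ) := by
  have hpow : (fun n : ℕ => (n : ℝ) ^ ((2 : ℝ) / 3)) =O[atTop] fun n => (n : ℝ) := by
    refine IsBigO.of_bound 1 ((eventually_ge_atTop 1).mono fun n hn => ?_)
    rw [one_mul, Real.norm_of_nonneg (by positivity), Real.norm_of_nonneg (by positivity)]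
    exact Real.rpow_le_self_of_one_le (Nat.one_le_cast.2 hn) (by norm_num)
  exact hC.ell_asymp.trans_isBigO (hpow.trans (isBigO_self_const_mul hC.integral_pos.ne' _ _))

theorem tendsto_ell : Tendsto (ell w) atTop atTop :=
  hC.ell_isEquivalent.symm.tendsto_atTop
    (tendsto_natCast_atTop_atTop.const_mul_atTop hC.integral_pos)

theorem natCast_isBigO_ell : (fun n : ℕ => (n : ℝ)) =O[atTop] ell w :=
  (isBigO_self_const_mul hC.integral_pos.ne' _ _).trans hC.ell_isEquivalent.isTheta.2

theorem natCast_rpow_isBigO_ell {q : ℝ} (hq : 0 ≤ q) :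
    (fun n : ℕ => (n : ℝ) ^ q) =O[atTop] fun n => ell w n ^ q :=
  hC.natCast_isBigO_ell.rpow hq (hC.tendsto_ell.eventually_ge_atTop 0)

theorem sum_sq_sub_ell_isBigO :
    (fun n => ∑ i, w n i ^ 2 - ell w n) =O[atTop] fun n => ell w n ^ ((2 : ℝ) / 3) := by
  have hsub := (hC.sq_asymp.sub hC.ell_asymp).isBigO.trans
    (hC.natCast_rpow_isBigO_ell (by norm_num))
  simpa [hC.moment_eq] using hsub

theorem sum_cube_isBigO : (fun n => ∑ i, w n i ^ 3) =O[atTop] ell w := by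
  have hone : (fun _ : ℕ => (1 : ℝ)) =O[atTop] fun n => (n : ℝ) :=
    .of_bound 1 <| (eventually_ge_atTop 1).mono fun n hn => by simpa using hn
  have hsum := (hC.cube_asymp.isBigO.trans hone).add
    (isBigO_const_mul_self (∫ x, x ^ 3 ∂μ) (fun n : ℕ => (n : ℝ)) atTop)
  simpa using hsum.trans hC.natCast_isBigO_ell

end CondC

section Asymptotic

variable {w : ∀ n : ℕ, Fin n → ℝ} {f : ℕ → ℝ} {C : ℝ}

theorem rpow_one_third_pow {x : ℝ} (hx : 0 ≤ x) (k : ℕ) :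
    (x ^ ((1 : ℝ) / 3)) ^ k = x ^ ((k : ℝ) / 3) := by
  rw [← Real.rpow_mul_natCast hx, one_div_mul_eq_div]

theorem exists_eventually_isScaled (hw : ∀ n i, 0 ≤ w n i) (hell : Tendsto (ell w) atTop atTop)
    (hmax : (fun n => ⨆ i, w n i) =o[atTop] fun n => ell w n ^ ((1 : ℝ) / 3))
    (hsq : (fun n => ∑ i, w n i ^ 2 - ell w n) =O[atTop] fun n => ell w n ^ ((2 : ℝ) / 3))
    (hcube : (fun n => ∑ i, w n i ^ 3) =O[atTop] ell w)
    (hf : f =o[atTop] fun n => ell w n ^ ((1 : ℝ) / 3)) (hC : 0 < C) :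
    ∃ K F : ℝ, ∀ᶠ n in atTop, F ≤ f n →
      IsScaled (w n) (ell w n ^ ((1 : ℝ) / 3)) C K (f n) := by
  obtain ⟨K₂, hK₂, hsq⟩ := hsq.exists_pos
  obtain ⟨K₃, hK₃, hcube⟩ := hcube.exists_pos
  refine ⟨1 + K₂ + K₃, 400 * (1 + K₂ + K₃) + 20 * C, ?_⟩
  filter_upwards [hell.eventually_ge_atTop 1, hmax.bound (c := min (1 / 10) (1 / (20 * C)))
    (by positivity), hsq.bound, hcube.bound, hf.bound (c := min (1 / 100) (C / 600))
    (by positivity)] with n hell hmax hsq hcube hf hF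
  have hr : 0 < ell w n ^ ((1 : ℝ) / 3) := by positivity
  rw [Real.norm_of_nonneg hr.le, min_mul_of_nonneg _ _ hr.le, le_min_iff] at hmax hf
  have hmax_le : ∀ u, w n u ≤ ‖⨆ i, w n i‖ := fun u =>
    (le_ciSup (Set.finite_range _).bddAbove u).trans (Real.le_norm_self _)
  have hell_pos : 0 < ell w n := by linarith
  have hr_sq : (ell w n ^ ((1 : ℝ) / 3)) ^ 2 = ell w n ^ ((2 : ℝ) / 3) :=
    mod_cast rpow_one_third_pow hell_pos.le 2
  have hr_cube : (ell w n ^ ((1 : ℝ) / 3)) ^ 3 = ell w n := by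
    simpa using rpow_one_third_pow hell_pos.le 3
  rw [Real.norm_eq_abs, abs_le, Real.norm_of_nonneg (by positivity)] at hsq
  rw [Real.norm_eq_abs, abs_le, Real.norm_of_nonneg hell_pos.le] at hcube
  exact {
    weight_nonneg := hw n
    one_le_r := Real.one_le_rpow hell (by norm_num)
    C_pos := hC
    one_le_K := by linarith
    le_f := hF
    f_le := by linarith [hf.1, Real.le_norm_self (f n)]
    f_le_mul := by linarith [hf.2, Real.le_norm_self (f n)]
    weight_le := fun u => by linarith [hmax.1, hmax_le u]
    mul_weight_le := fun u => by
      have := mul_le_mul_of_nonneg_left ((hmax_le u).trans hmax.2) (by positivity : 0 ≤ 20 * C)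
      field_simp at this
      linarith
    sum_eq := hr_cube.symm
    sum_sq_le := by
      rw [hr_cube, hr_sq]
      nlinarith [hsq.2, Real.rpow_pos_of_pos hell_pos (2 / 3)]
    sum_cube_le := by
      rw [hr_cube]
      nlinarith [hcube.2] }

theorem reflected_exploration_process_upper_bound_general (hw : ∀ n i, 0 < w n i)
    (hell : Tendsto (ell w) atTop atTop)
    (hmax : (fun n => ⨆ i, w n i) =o[atTop] fun n => ell w n ^ ((1 : ℝ) / 3))
    (hsq : (fun n => ∑ i, w n i ^ 2 - ell w n) =O[atTop] fun n => ell w n ^ ((2 : ℝ) / 3))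
    (hcube : (fun n => ∑ i, w n i ^ 3) =O[atTop] ell w)
    (hf : f =o[atTop] fun n => ell w n ^ ((1 : ℝ) / 3)) (hC : 0 < C) {m : ℕ → ℕ}
    (hm : ∀ n, (m n : ℝ) ≤ 4 * f n * ell w n ^ ((2 : ℝ) / 3) / C) :
    ∃ A > (0 : ℝ), ∃ F : ℝ, ∀ᶠ n : ℕ in atTop, F ≤ f n →
      expMeasure' n (w n) (pf w f n)
        {ω : (Fin n → Fin n → Bool) × (Fin n → Fin n) |
          ∃ i : ℕ, 1 ≤ i ∧ i ≤ m n ∧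
            10 * f n ^ 2 * ell w n ^ ((1 : ℝ) / 3) / C ≤ (Lproc (graphOf ω.1) ω.2 i : ℝ)}
      ≤ ENNReal.ofReal (A * Real.exp (-f n / A)) := by
  obtain ⟨K, F, hscaled⟩ := exists_eventually_isScaled (fun n i => (hw n i).le) hell hmax hsq
    hcube hf hC
  refine ⟨4, by norm_num, F, ?_⟩
  filter_upwards [hscaled, hell.eventually_ge_atTop 0] with n hscaled hell hF
  refine expMeasure'_le_of_forall_perm (hw n) fun σ => ?_
  have hm : (m n : ℝ) ≤ 4 * f n * (ell w n ^ ((1 : ℝ) / 3)) ^ 2 / C := by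
    rw [rpow_one_third_pow hell, Nat.cast_ofNat]
    exact hm n
  have hfn := (hscaled hF).one_le_f
  have hp : pf w f n = (ell w n ^ ((1 : ℝ) / 3) + f n) / (ell w n ^ ((1 : ℝ) / 3)) ^ 4 := by
    rw [rpow_one_third_pow hell, pf, Nat.cast_ofNat]
  rw [hp]
  refine ((hscaled hF).measure_exists_le_Lproc_le σ.bijective hm).trans ?_
  rw [ENNReal.ofReal_mul (by norm_num), ENNReal.ofReal_ofNat]
  gcongr
  linarith

end Asymptotic

/-- Theorem of the paper: uniform upper bound on the reflected
exploration process `L` up to time `m`, for `f ℓ_n^{2/3}/C ≤ m ≤ 4 f ℓ_n^{2/3}/C`. -/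
theorem reflected_exploration_process_upper_bound
    (w : ∀ n : ℕ, Fin n → ℝ) (μ : Measure ℝ) (hC : CondC w μ)
    (f : ℕ → ℝ) (hf : f =o[atTop] fun n : ℕ => (n : ℝ) ^ ((1 : ℝ) / 3))
    (m : ℕ → ℕ)
    (hm : ∀ n, f n * ell w n ^ ((2 : ℝ) / 3) / Cconst μ ≤ (m n : ℝ) ∧
      (m n : ℝ) ≤ 4 * f n * ell w n ^ ((2 : ℝ) / 3) / Cconst μ) :
    ∃ A > (0 : ℝ), ∃ F : ℝ, ∀ᶠ n : ℕ in atTop, F ≤ f n →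
      expMeasure' n (w n) (pf w f n)
        {ω : (Fin n → Fin n → Bool) × (Fin n → Fin n) |
          ∃ i : ℕ, 1 ≤ i ∧ i ≤ m n ∧
            10 * f n ^ 2 * ell w n ^ ((1 : ℝ) / 3) / Cconst μ
              ≤ (Lproc (graphOf ω.1) ω.2 i : ℝ)}
      ≤ ENNReal.ofReal (A * Real.exp (-f n / A)) :=
  reflected_exploration_process_upper_bound_general hC.w_pos hC.tendsto_ell
    (hC.max_asymp.trans_isBigO (hC.natCast_rpow_isBigO_ell (by norm_num))) hC.sum_sq_sub_ell_isBigO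
    hC.sum_cube_isBigO (hf.trans_isBigO (hC.natCast_rpow_isBigO_ell (by norm_num))) hC.Cconst_pos
    fun n => (hm n).2
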